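/- arXiv:1310.6658 — 10 statements merged into one kernel-verified Lean document; each statement's English description precedes it below -/
import Mathlib

section
/- Let n ≥ 1 and let L = ∂^n + Σ_{i=0}^{n−1} a_i(z)∂^i be a monic differential operator with a_i ∈ ℂ(z). If 0 ≠ α ∈ ℂ(z) satisfies L ∘ α = (−1)^n α ∘ L^∨ (α acting by multiplication), then α′ = −(2/n) a_{n−1} α. -/
/-!
Commuting with multiplication by `z` is a `ℂ`-linear map `P ↦ [P, z]` on operators which
commutes with composition by multiplication operators on either side and sends `∂^i` to
`i ∂^(i-1)`. Applying it `n - 1` times to the self-duality relation kills every term of order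
below `n - 1` and, after division by `(n - 1)!`, leaves
`(n ∂ + a_{n-1}) ∘ α = α ∘ (n ∂ - a_{n-1})`. Evaluating both sides at the constant `1`
gives `n α' + a_{n-1} α = -a_{n-1} α`.
-/

open Finset

/-- The multiplication-by-`a` operator on the field `ℂ(z)` of rational functions,
as a `ℂ`-linear endomorphism. -/
noncomputable def mulOp (a : RatFunc ℂ) : Module.End ℂ (RatFunc ℂ) :=
  LinearMap.mulLeft ℂ a

/-- The commutator `P ↦ [P, z]` with multiplication by `z`. It lowers the order of a
differential operator by one: `[∂, z] = 1`. -/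
noncomputable def commX : Module.End ℂ (Module.End ℂ (RatFunc ℂ)) :=
  LinearMap.mulRight ℂ (mulOp RatFunc.X) - LinearMap.mulLeft ℂ (mulOp RatFunc.X)

lemma commX_apply (P : Module.End ℂ (RatFunc ℂ)) :
    commX P = P * mulOp RatFunc.X - mulOp RatFunc.X * P := rfl

lemma mulOp_mul_comm (f g : RatFunc ℂ) : mulOp f * mulOp g = mulOp g * mulOp f := by
  ext h
  simp [mulOp, mul_left_comm]

lemma commX_mulOp_mul (f : RatFunc ℂ) (P : Module.End ℂ (RatFunc ℂ)) :
    commX (mulOp f * P) = mulOp f * commX P := by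
  simp only [commX_apply, mul_sub, ← mul_assoc]
  rw [mulOp_mul_comm f]

lemma commX_mul_mulOp (f : RatFunc ℂ) (P : Module.End ℂ (RatFunc ℂ)) :
    commX (P * mulOp f) = commX P * mulOp f := by
  simp only [commX_apply, sub_mul, mul_assoc]
  rw [mulOp_mul_comm f]

lemma commX_pow_mulOp_mul (k : ℕ) (f : RatFunc ℂ) (P : Module.End ℂ (RatFunc ℂ)) :
    (commX ^ k) (mulOp f * P) = mulOp f * (commX ^ k) P := by
  induction k with
  | zero => simp
  | succ k ih => simp only [pow_succ', Module.End.mul_apply, ih, commX_mulOp_mul]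

lemma commX_pow_mul_mulOp (k : ℕ) (f : RatFunc ℂ) (P : Module.End ℂ (RatFunc ℂ)) :
    (commX ^ k) (P * mulOp f) = (commX ^ k) P * mulOp f := by
  induction k with
  | zero => simp
  | succ k ih => simp only [pow_succ', Module.End.mul_apply, ih, commX_mul_mulOp]

lemma commX_pow_deriv {D : Module.End ℂ (RatFunc ℂ)} (hD : commX D = 1) (i : ℕ) :
    commX (D ^ i) = (i : ℂ) • D ^ (i - 1) := by
  induction i with
  | zero => simp [commX_apply]
  | succ i ih =>
    -- the commutator is a derivation of the endomorphism ring
    have h : commX (D ^ (i + 1)) = D ^ i * commX D + commX (D ^ i) * D := by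
      simp only [commX_apply, pow_succ]
      noncomm_ring
    rw [h, hD, ih]
    rcases i with _ | i
    · simp
    · simp [pow_succ, add_smul, add_mul, add_comm]

lemma commX_iterate_pow_deriv {D : Module.End ℂ (RatFunc ℂ)} (hD : commX D = 1) (k i : ℕ) :
    (commX ^ k) (D ^ i) = (i.descFactorial k : ℂ) • D ^ (i - k) := by
  induction k with
  | zero => simp
  | succ k ih =>
    rw [pow_succ', Module.End.mul_apply, ih, map_smul, commX_pow_deriv hD, smul_smul,
      Nat.descFactorial_succ, Nat.cast_mul, mul_comm, Nat.sub_sub]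

/-- if the monic operator `L = ∂^n + Σ_{i<n} aᵢ ∂^i` satisfies the
self-duality condition `L ∘ α = (−1)^n α ∘ L^∨` with `α ≠ 0`, then
`α′ = −(2/n) a_{n−1} α`.  Here `Dz` is the derivative `d/dz` on `ℂ(z)`,
characterized as the `ℂ`-linear endomorphism satisfying the Leibniz rule and
`Dz z = 1`; the dual of `L` is `L^∨ = (−1)^n ∂^n + Σ_{i<n} (−1)^i ∂^i ∘ aᵢ`. -/
theorem stmt1 (n : ℕ) (hn : 1 ≤ n)
    (Dz : Module.End ℂ (RatFunc ℂ))
    (hLeib : ∀ f g : RatFunc ℂ, Dz (f * g) = f * Dz g + g * Dz f)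
    (hX : Dz RatFunc.X = 1)
    (a : ℕ → RatFunc ℂ) (α : RatFunc ℂ) (hα : α ≠ 0)
    (hself : (Dz ^ n + ∑ i ∈ range n, mulOp (a i) * Dz ^ i) * mulOp α
        = ((-1 : ℂ) ^ n) • (mulOp α *
            (((-1 : ℂ) ^ n) • Dz ^ n
              + ∑ i ∈ range n, ((-1 : ℂ) ^ i) • (Dz ^ i * mulOp (a i))))) :
    Dz α = -(2 / (n : ℂ)) • (a (n - 1) * α) := by
  have hD : commX Dz = 1 := by
    ext f
    simp [commX_apply, mulOp, hLeib, hX]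
  have h1 : Dz 1 = 0 := by
    have h := hLeib 1 1
    simpa using h
  obtain ⟨m, rfl⟩ : ∃ m, n = m + 1 := ⟨n - 1, by omega⟩
  have hlow : ∀ i ∈ range m, (commX ^ m) (Dz ^ i) = 0 := fun i hi => by
    rw [commX_iterate_pow_deriv hD, Nat.descFactorial_of_lt (mem_range.mp hi)]
    simp
  have hm : (commX ^ m) (Dz ^ m) = (m.factorial : ℂ) • 1 := by
    rw [commX_iterate_pow_deriv hD, Nat.descFactorial_self]
    simp
  have hm1 : (commX ^ m) (Dz ^ (m + 1)) = ((m.factorial : ℂ) * (m + 1)) • Dz := by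
    have e : (m + 1).descFactorial m = m.factorial * (m + 1) := by
      have h := Nat.descFactorial_succ (m + 1) m
      rw [Nat.descFactorial_self, Nat.add_sub_cancel_left, one_mul, Nat.factorial_succ] at h
      rw [← h, mul_comm]
    rw [commX_iterate_pow_deriv hD, e]
    simp
  have hs1 : ∑ i ∈ range m, (commX ^ m) (mulOp (a i) * Dz ^ i) = 0 :=
    sum_eq_zero fun i hi => by rw [commX_pow_mulOp_mul, hlow i hi, mul_zero]
  have hs2 : ∑ i ∈ range m, (commX ^ m) (((-1 : ℂ) ^ i) • (Dz ^ i * mulOp (a i))) = 0 :=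
    sum_eq_zero fun i hi => by
      rw [map_smul, commX_pow_mul_mulOp, hlow i hi, zero_mul, smul_zero]
  have key := congrArg (commX ^ m) hself
  rw [commX_pow_mul_mulOp, map_smul, commX_pow_mulOp_mul, map_add, map_add, map_sum, map_sum,
    sum_range_succ, sum_range_succ, hs1, hs2, map_smul, map_smul, commX_pow_mulOp_mul,
    commX_pow_mul_mulOp, hm, hm1] at key
  have key1 := congrArg (fun P : Module.End ℂ (RatFunc ℂ) => P 1) key
  have hf : (m.factorial : ℂ) ≠ 0 := by exact_mod_cast m.factorial_ne_zero
  have hn0 : ((m : ℂ) + 1) ≠ 0 := by exact_mod_cast m.succ_ne_zero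
  have hsign : (-1 : ℂ) ^ (m + 1) * (-1) ^ m = -1 := by
    rw [pow_succ, mul_right_comm, ← mul_pow]
    simp
  simp only [mulOp, Module.End.mul_apply, LinearMap.add_apply, LinearMap.smul_apply,
    LinearMap.mulLeft_apply, Module.End.one_apply, h1, mul_one, smul_zero, zero_add,
    mul_smul_comm, smul_smul] at key1
  rw [← mul_assoc, hsign, mul_comm α] at key1
  rw [Nat.add_sub_cancel]
  apply smul_right_injective (RatFunc ℂ) (mul_ne_zero hf hn0)
  have hc : (m.factorial : ℂ) * (m + 1) * -(2 / ((m + 1 : ℕ) : ℂ))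
      = -1 * m.factorial - m.factorial := by
    push_cast
    field_simp
    ring
  simp only [smul_smul, hc]
  rw [sub_smul, ← key1, add_sub_cancel_right]
end

section
/- Let L = ∂^4 + a_3(z)∂^3 + a_2(z)∂^2 + a_1(z)∂ + a_0(z) with a_i ∈ ℂ(z). If 0 ≠ α ∈ ℂ(z) satisfies L ∘ α = α ∘ L^∨ (α acting by multiplication), then a_1 = (1/2)a_2 a_3 − (1/8)a_3^3 + a_2′ − (3/4)a_3 a_3′ − (1/2)a_3″. -/
/-!
Write `D` for the derivation. Expanding both sides of the self-duality condition by the Leibniz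
rule turns it into an identity `E₃ f‴ + E₂ f″ + E₁ f′ + E₀ f = 0` valid for every `f`; evaluating at
`1, z, z², z³` shows that all `Eᵢ` vanish (`coeffs_eq_zero`). Vanishing of `E₃` reads
`α′ = -a₃ α / 2`, which expresses `α′, α″, α‴` as multiples of `α`. Substituting these into `E₁ = 0`
and cancelling `α` yields the formula for `a₁`.
-/

/-- A differential operator of order at most three that kills `1, z, z², z³` is zero; only the
coefficients of `D³` and `D` are recorded. -/
theorem coeffs_eq_zero
    (D : Module.End ℂ (RatFunc ℂ))
    (hLeib : ∀ f g : RatFunc ℂ, D (f * g) = f * D g + g * D f)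
    (hX : D RatFunc.X = 1) (E0 E1 E2 E3 : RatFunc ℂ)
    (h : ∀ f, E3 * D (D (D f)) + E2 * D (D f) + E1 * D f + E0 * f = 0) :
    E3 = 0 ∧ E1 = 0 := by
  have h1 : D 1 = 0 := by
    have := hLeib 1 1
    simp only [one_mul] at this
    linear_combination -this
  have e0 := h 1
  have e1 := h RatFunc.X
  have e2 := h (RatFunc.X * RatFunc.X)
  have e3 := h (RatFunc.X * (RatFunc.X * RatFunc.X))
  simp only [hLeib, map_add, hX, h1, map_zero, mul_one, mul_zero, add_zero, zero_add]
    at e0 e1 e2 e3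
  subst e0
  have e1 : E1 = 0 := by linear_combination e1
  subst e1
  have e2 : E2 = 0 := by linear_combination e2 / 2
  subst e2
  exact ⟨by linear_combination e3 / 6, rfl⟩

/-- if `L = ∂⁴ + a₃∂³ + a₂∂² + a₁∂ + a₀` satisfies the self-duality
condition `L ∘ α = α ∘ L^∨` with `α ≠ 0`, then
`a₁ = (1/2)a₂a₃ − (1/8)a₃³ + a₂′ − (3/4)a₃a₃′ − (1/2)a₃″`.
Here `Dz` is the derivative `d/dz` on `ℂ(z)`, characterized as the `ℂ`-linear
endomorphism satisfying the Leibniz rule and `Dz z = 1`; the dual is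
`L^∨ = ∂⁴ − ∂³∘a₃ + ∂²∘a₂ − ∂∘a₁ + a₀`. -/
theorem stmt2
    (Dz : Module.End ℂ (RatFunc ℂ))
    (hLeib : ∀ f g : RatFunc ℂ, Dz (f * g) = f * Dz g + g * Dz f)
    (hX : Dz RatFunc.X = 1)
    (a0 a1 a2 a3 : RatFunc ℂ) (α : RatFunc ℂ) (hα : α ≠ 0)
    (hself : (Dz ^ 4 + mulOp a3 * Dz ^ 3 + mulOp a2 * Dz ^ 2
          + mulOp a1 * Dz + mulOp a0) * mulOp α
        = mulOp α * (Dz ^ 4 - Dz ^ 3 * mulOp a3 + Dz ^ 2 * mulOp a2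
          - Dz * mulOp a1 + mulOp a0)) :
    a1 = (1 / 2 : ℂ) • (a2 * a3) - (1 / 8 : ℂ) • a3 ^ 3 + Dz a2
        - (3 / 4 : ℂ) • (a3 * Dz a3) - (1 / 2 : ℂ) • Dz (Dz a3) := by
  have key := coeffs_eq_zero Dz hLeib hX
    (Dz (Dz (Dz (Dz α))) + a3 * Dz (Dz (Dz α)) + a2 * Dz (Dz α) + a1 * Dz α
      + α * (Dz (Dz (Dz a3)) - Dz (Dz a2) + Dz a1))
    (4 * Dz (Dz (Dz α)) + 3 * a3 * Dz (Dz α) + 2 * a2 * Dz α + a1 * α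
      + α * (3 * Dz (Dz a3) - 2 * Dz a2 + a1))
    (6 * Dz (Dz α) + 3 * a3 * Dz α + 3 * α * Dz a3)
    (4 * Dz α + 2 * a3 * α) (by
      intro f
      have hf := LinearMap.congr_fun hself f
      simp only [mulOp, pow_succ, pow_zero, one_mul, Module.End.mul_apply, LinearMap.add_apply,
        LinearMap.sub_apply, LinearMap.mulLeft_apply, hLeib, map_add] at hf
      linear_combination hf)
  obtain ⟨h3, h1⟩ := key
  have d1 : Dz α = (-1 / 2 : ℂ) • (a3 * α) := by
    rw [Algebra.smul_def]
    simp only [map_div₀, map_neg, map_one, map_ofNat]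
    linear_combination h3 / 4
  have d2 : Dz (Dz α) = (-1 / 2 : ℂ) • (a3 * Dz α + α * Dz a3) := by
    conv_lhs => rw [d1, map_smul, hLeib]
  have d3 : Dz (Dz (Dz α)) = (-1 / 2 : ℂ) •
      (a3 * Dz (Dz α) + 2 * Dz α * Dz a3 + α * Dz (Dz a3)) := by
    conv_lhs => rw [d2, map_smul, map_add, hLeib, hLeib]
    congr 1
    ring
  simp only [Algebra.smul_def, map_div₀, map_neg, map_one, map_ofNat] at d1 d2 d3 ⊢
  rw [d3, d2, d1] at h1
  apply mul_left_cancel₀ hα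
  linear_combination h1 / 2
end

section
/- Let P_0,…,P_m ∈ ℂ[T] be polynomials and let D = Σ_{k=0}^m z^k P_k(θ). Write D in the form D = Σ_{i=0}^n b_i(z)∂^i with b_i ∈ ℂ[z]. Then Σ_{i=0}^n (−1)^i ∂^i ∘ b_i(z) = Σ_{k=0}^m z^k P_k(−θ−k−1) as operators; that is, the dual of D = Σ_{k=0}^m z^k P_k(θ) is D^∨ = Σ_{k=0}^m z^k P_k(−θ−k−1). -/
/-!
Call `L` and `M` adjoint if `f * L g - g * M f` is a derivative for all `f`, `g` in `ℂ(z)`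
(Lagrange's identity). Adjointness is additive and reverses products; multiplication operators are
self-adjoint, and `∂` is adjoint to `-∂` by the Leibniz rule. Hence `∑ (-1)^i ∂^i ∘ b_i` is adjoint
to `∑ b_i ∂^i`. Likewise `θ` is adjoint to `-∂ ∘ z = -θ - 1`, so `z^k P(θ)` is adjoint to
`P(-θ - 1) ∘ z^k`, which is `z^k P(-θ - k - 1)` because `θ ∘ z^k = z^k ∘ (θ + k)`.

An operator has at most one adjoint (`IsAdj.unique`): if `M f ≠ M' f`, a suitable choice of `g`
would exhibit `1/z` as a derivative, contradicting `Dz_ne_inv_X`. So the two adjoints of `D` agree.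
-/

open Finset Polynomial

/-- `M` is a formal adjoint of `L` with respect to the derivation `Dz`: the difference
`f * L g - g * M f` is always exact. -/
def IsAdj (Dz L M : Module.End ℂ (RatFunc ℂ)) : Prop :=
  ∀ f g : RatFunc ℂ, ∃ h, Dz h = f * L g - g * M f

theorem mulOp_apply (a f : RatFunc ℂ) : mulOp a f = a * f := rfl

theorem Dz_algebraMap (Dz : Module.End ℂ (RatFunc ℂ))
    (hLeib : ∀ f g : RatFunc ℂ, Dz (f * g) = f * Dz g + g * Dz f)
    (hX : Dz RatFunc.X = 1) (p : ℂ[X]) :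
    Dz (algebraMap ℂ[X] (RatFunc ℂ) p) = algebraMap ℂ[X] (RatFunc ℂ) (derivative p) := by
  have h1 : Dz 1 = 0 := by simpa using hLeib 1 1
  have hC : ∀ c : ℂ, Dz (algebraMap ℂ[X] (RatFunc ℂ) (C c)) = 0 := by
    intro c
    have : algebraMap ℂ[X] (RatFunc ℂ) (C c) = c • (1 : RatFunc ℂ) := by
      rw [RatFunc.smul_eq_C_mul, mul_one, RatFunc.algebraMap_C]
    rw [this, map_smul, h1, smul_zero]
  induction p using Polynomial.induction_on with
  | C a => simpa using hC a
  | add p q hp hq => simp only [map_add, hp, hq]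
  | monomial n a ih =>
    rw [pow_succ, ← mul_assoc, map_mul, hLeib, ih, RatFunc.algebraMap_X, hX,
      derivative_mul (f := C a * X ^ n), derivative_X]
    simp only [map_add, map_mul, RatFunc.algebraMap_X, map_one]
    ring

/-- `1/z` has no rational primitive. Writing a primitive in lowest terms as `p / (X ^ a * s)` with
`s(0) ≠ 0`, clearing denominators and evaluating at `0` forces `p(0) = 0` when `a > 0` and
`s(0) = 0` when `a = 0`. -/
theorem Dz_ne_inv_X (Dz : Module.End ℂ (RatFunc ℂ))
    (hLeib : ∀ f g : RatFunc ℂ, Dz (f * g) = f * Dz g + g * Dz f)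
    (hX : Dz RatFunc.X = 1) (r : RatFunc ℂ) : Dz r ≠ (RatFunc.X)⁻¹ := by
  intro hr
  have hq0 : r.denom ≠ 0 := r.denom_ne_zero
  have hcop := r.isCoprime_num_denom
  have hrq : r * algebraMap ℂ[X] (RatFunc ℂ) r.denom = algebraMap ℂ[X] (RatFunc ℂ) r.num := by
    have h0 : algebraMap ℂ[X] (RatFunc ℂ) r.denom ≠ 0 := by simpa using hq0
    exact (div_eq_iff h0).mp r.num_div_denom |>.symm
  have hd := hLeib r (algebraMap ℂ[X] (RatFunc ℂ) r.denom)
  generalize r.denom = q at *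
  generalize r.num = p at *
  rw [hrq, Dz_algebraMap Dz hLeib hX, Dz_algebraMap Dz hLeib hX, hr] at hd
  have hX0 : (RatFunc.X : RatFunc ℂ) ≠ 0 := RatFunc.X_ne_zero
  have key : X * (derivative p * q) = X * (p * derivative q) + q * q := by
    apply RatFunc.algebraMap_injective ℂ
    simp only [map_add, map_mul, RatFunc.algebraMap_X, hd, ← hrq]
    field_simp
  obtain ⟨s, hs, hXs⟩ := exists_eq_pow_rootMultiplicity_mul_and_not_dvd q hq0 0
  generalize rootMultiplicity 0 q = a at hs
  rw [C_0, sub_zero] at hs hXs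
  have hs0 : eval 0 s ≠ 0 := by
    rwa [Ne, ← coeff_zero_eq_eval_zero, ← X_dvd_iff]
  subst hs
  rcases a with _ | a
  · have := congrArg (eval 0) key
    simp at this
    exact hs0 this
  · have hp0 : eval 0 p ≠ 0 := by
      intro h
      obtain ⟨u, v, huv⟩ := hcop
      have := congrArg (eval 0) huv
      simp [h] at this
    have key2 : X * (derivative p * s) =
        p * (((a : ℂ[X]) + 1) * s + X * derivative s) + X ^ (a + 1) * (s * s) := by
      have hXa : (X : ℂ[X]) ^ (a + 1) ≠ 0 := pow_ne_zero _ X_ne_zero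
      apply mul_left_cancel₀ hXa
      simp only [derivative_mul, derivative_X_pow, Nat.add_sub_cancel] at key
      push_cast at key
      simp only [map_add, map_one, map_natCast] at key
      linear_combination key
    have := congrArg (eval 0) key2
    simp [hs0, hp0] at this
    exact Nat.cast_add_one_ne_zero a this

namespace IsAdj

variable {Dz L M L' M' : Module.End ℂ (RatFunc ℂ)}

theorem add (h : IsAdj Dz L M) (h' : IsAdj Dz L' M') : IsAdj Dz (L + L') (M + M') := by
  intro f g
  obtain ⟨u, hu⟩ := h f g
  obtain ⟨v, hv⟩ := h' f g
  refine ⟨u + v, ?_⟩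
  rw [map_add, hu, hv, LinearMap.add_apply, LinearMap.add_apply]
  ring

theorem smul (c : ℂ) (h : IsAdj Dz L M) : IsAdj Dz (c • L) (c • M) := by
  intro f g
  obtain ⟨u, hu⟩ := h f g
  refine ⟨c • u, ?_⟩
  rw [map_smul, hu, LinearMap.smul_apply, LinearMap.smul_apply, smul_sub, mul_smul_comm,
    mul_smul_comm]

theorem mul (h : IsAdj Dz L M) (h' : IsAdj Dz L' M') : IsAdj Dz (L * L') (M' * M) := by
  intro f g
  obtain ⟨u, hu⟩ := h f (L' g)
  obtain ⟨v, hv⟩ := h' (M f) g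
  refine ⟨u + v, ?_⟩
  rw [map_add, hu, hv, Module.End.mul_apply, Module.End.mul_apply]
  ring

theorem one : IsAdj Dz 1 1 := fun f g => ⟨0, by simp [mul_comm]⟩

theorem pow (h : IsAdj Dz L M) (n : ℕ) : IsAdj Dz (L ^ n) (M ^ n) := by
  induction n with
  | zero => simpa using one
  | succ n ih =>
    rw [pow_succ, pow_succ']
    exact ih.mul h

theorem sum {A B : ℕ → Module.End ℂ (RatFunc ℂ)} (s : Finset ℕ)
    (h : ∀ i, IsAdj Dz (A i) (B i)) : IsAdj Dz (∑ i ∈ s, A i) (∑ i ∈ s, B i) := by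
  induction s using Finset.induction_on with
  | empty => exact fun f g => ⟨0, by simp⟩
  | insert i s hi ih =>
    rw [sum_insert hi, sum_insert hi]
    exact (h i).add ih

theorem mulOp_self (a : RatFunc ℂ) : IsAdj Dz (mulOp a) (mulOp a) :=
  fun f g => ⟨0, by simp only [map_zero, mulOp_apply]; ring⟩

theorem aeval_poly (h : IsAdj Dz L M) (p : ℂ[X]) : IsAdj Dz (aeval L p) (aeval M p) := by
  rw [aeval_eq_sum_range, aeval_eq_sum_range]
  exact sum _ fun i => (h.pow i).smul _

/-- Adjoints are unique: if `d = M f - M' f ≠ 0`, testing against `g = 1 / (z d)` makes `1/z`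
exact. -/
theorem unique (hLeib : ∀ f g : RatFunc ℂ, Dz (f * g) = f * Dz g + g * Dz f)
    (hX : Dz RatFunc.X = 1) (h : IsAdj Dz L M) (h' : IsAdj Dz L M') : M = M' := by
  ext1 f
  by_contra hne
  have hd : M f - M' f ≠ 0 := sub_ne_zero.mpr hne
  obtain ⟨u, hu⟩ := h f ((M f - M' f)⁻¹ * RatFunc.X⁻¹)
  obtain ⟨v, hv⟩ := h' f ((M f - M' f)⁻¹ * RatFunc.X⁻¹)
  apply Dz_ne_inv_X Dz hLeib hX (v - u)
  rw [map_sub, hu, hv]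
  linear_combination (RatFunc.X⁻¹ : RatFunc ℂ) * inv_mul_cancel₀ hd

end IsAdj

theorem Dz_X_pow (Dz : Module.End ℂ (RatFunc ℂ))
    (hLeib : ∀ f g : RatFunc ℂ, Dz (f * g) = f * Dz g + g * Dz f)
    (hX : Dz RatFunc.X = 1) (k : ℕ) :
    RatFunc.X * Dz (RatFunc.X ^ k) = (k : RatFunc ℂ) * RatFunc.X ^ k := by
  induction k with
  | zero =>
    have h1 : Dz 1 = 0 := by simpa using hLeib 1 1
    simp [h1]
  | succ k ih =>
    rw [pow_succ, hLeib, hX]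
    push_cast
    linear_combination RatFunc.X * ih

/-- An intertwining relation `B ∘ Z = Z ∘ A` passes to polynomials in `A` and `B`. -/
theorem aeval_intertwine {Z A B : Module.End ℂ (RatFunc ℂ)} (h : SemiconjBy Z A B) (p : ℂ[X]) :
    aeval B p * Z = Z * aeval A p := by
  rw [aeval_eq_sum_range, aeval_eq_sum_range, sum_mul, mul_sum]
  refine sum_congr rfl fun i _ => ?_
  rw [smul_mul_assoc, mul_smul_comm, (h.pow_right i).eq]

/-- let `D = Σ_{k=0}^m z^k P_k(θ)` where `θ = z∂` is the Euler
operator, and write `D = Σ_{i=0}^n bᵢ(z) ∂^i` with `bᵢ ∈ ℂ[z]`. Then the dual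
`D^∨ = Σ_{i=0}^n (−1)^i ∂^i ∘ bᵢ(z)` equals `Σ_{k=0}^m z^k P_k(−θ−k−1)`.
Here `Dz` is the derivative `d/dz` on `ℂ(z)`, characterized as the `ℂ`-linear
endomorphism satisfying the Leibniz rule and `Dz z = 1`. -/
theorem stmt3 (m n : ℕ)
    (Dz : Module.End ℂ (RatFunc ℂ))
    (hLeib : ∀ f g : RatFunc ℂ, Dz (f * g) = f * Dz g + g * Dz f)
    (hX : Dz RatFunc.X = 1)
    (P : ℕ → Polynomial ℂ) (b : ℕ → Polynomial ℂ)
    (θ : Module.End ℂ (RatFunc ℂ)) (hθ : θ = mulOp RatFunc.X * Dz)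
    (hD : ∑ k ∈ range (m + 1), mulOp (RatFunc.X ^ k) * aeval θ (P k)
        = ∑ i ∈ range (n + 1),
            mulOp (algebraMap (Polynomial ℂ) (RatFunc ℂ) (b i)) * Dz ^ i) :
    ∑ i ∈ range (n + 1), ((-1 : ℂ) ^ i) •
        (Dz ^ i * mulOp (algebraMap (Polynomial ℂ) (RatFunc ℂ) (b i)))
      = ∑ k ∈ range (m + 1), mulOp (RatFunc.X ^ k) *
          aeval (-θ - (((k : ℂ) + 1) • 1 : Module.End ℂ (RatFunc ℂ))) (P k) := by
  have hDz : IsAdj Dz Dz ((-1 : ℂ) • Dz) := fun f g => ⟨f * g, by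
    rw [hLeib, LinearMap.smul_apply, neg_one_smul]
    ring⟩
  have hθ' : IsAdj Dz θ (-θ - 1) := by
    have h := (IsAdj.mulOp_self (Dz := Dz) RatFunc.X).mul hDz
    rw [← hθ] at h
    convert h using 1
    ext1 f
    simp only [hθ, LinearMap.sub_apply, LinearMap.neg_apply, Module.End.mul_apply, mulOp_apply,
      Module.End.one_apply, hLeib, hX, neg_one_smul]
    ring
  have hleft : IsAdj Dz (∑ i ∈ range (n + 1),
        mulOp (algebraMap (Polynomial ℂ) (RatFunc ℂ) (b i)) * Dz ^ i)
      (∑ i ∈ range (n + 1), ((-1 : ℂ) ^ i) •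
        (Dz ^ i * mulOp (algebraMap (Polynomial ℂ) (RatFunc ℂ) (b i)))) := by
    refine IsAdj.sum _ fun i => ?_
    have h := (IsAdj.mulOp_self (Dz := Dz) (algebraMap (Polynomial ℂ) (RatFunc ℂ) (b i))).mul
      (hDz.pow i)
    rwa [_root_.smul_pow, smul_mul_assoc] at h
  rw [← hD] at hleft
  refine hleft.unique hLeib hX (IsAdj.sum _ fun k => ?_)
  have h := (IsAdj.mulOp_self (Dz := Dz) (RatFunc.X ^ k)).mul (hθ'.aeval_poly (P k))
  rwa [aeval_intertwine (A := -θ - (((k : ℂ) + 1) • 1 : Module.End ℂ (RatFunc ℂ)))] at h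
  change mulOp (RatFunc.X ^ k) * _ = _ * mulOp (RatFunc.X ^ k)
  ext1 f
  have hk : ((k : ℂ) + 1) • f = ((k : RatFunc ℂ) + 1) * f := by
    rw [RatFunc.smul_eq_C_mul, map_add, map_natCast, map_one]
  simp only [hθ, LinearMap.sub_apply, LinearMap.neg_apply, Module.End.mul_apply, mulOp_apply,
    LinearMap.smul_apply, Module.End.one_apply, hLeib, hk]
  linear_combination f * Dz_X_pow Dz hLeib hX k
end

section
/- Let n ≥ 0, let P_0,…,P_m ∈ ℂ[T], let D = Σ_{k=0}^m z^k P_k(θ), and let D^∨ = Σ_{k=0}^m z^k P_k(−θ−k−1) be its dual. Then D ∘ z = (−1)^n z ∘ D^∨ (z acting by multiplication) holds if and only if P_k(T) = (−1)^n P_k(−T−k) in ℂ[T] for all 0 ≤ k ≤ m. -/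
/-!
Since `θ ∘ z = z ∘ (θ + 1)`, also `P(θ) ∘ z = z ∘ P(θ + 1)` for every polynomial `P`
(`aeval_mul_of_commutation`). Hence `D ∘ z - (-1)^n z ∘ D^∨ = z ∘ Σ z^k Q_k(θ)` with
`Q_k(T) = P_k(T + 1) - (-1)^n P_k(-T - k - 1)`. An operator `Σ z^k Q_k(θ)` is zero only if every
`Q_k` is (`eq_zero_of_sum_eq_zero`): it sends `z^j` to `Σ Q_k(j) z^(k+j)`, so each `Q_k` vanishes
at every natural number. Finally `Q_k = 0` is the symmetry `P_k(T) = (-1)^n P_k(-T - k)` after the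
shift `T ↦ T + 1`.
-/

open Finset Polynomial

lemma aeval_mul_of_commutation {A : Type*} [Ring A] [Algebra ℂ A] (t M : A)
    (h : t * M = M * (t + 1)) (p : ℂ[X]) : aeval t p * M = M * aeval t (p.comp (X + 1)) := by
  have hc : aeval t (p.comp (X + 1)) = aeval (t + 1) p := by
    rw [aeval_comp]; simp
  rw [hc]
  clear hc
  induction p using Polynomial.induction_on' with
  | add p q hp hq => simp only [map_add, add_mul, mul_add, hp, hq]
  | monomial i a =>
    have hs : SemiconjBy M (t + 1) t := h.symm
    have hpow : M * (t + 1) ^ i = t ^ i * M := hs.pow_right i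
    rw [aeval_monomial, aeval_monomial, mul_assoc, ← hpow, ← mul_assoc, ← mul_assoc,
      Algebra.commutes]

/-- The monomials `z^j` are eigenvectors of the Euler operator, so `p(θ) z^j = p(j) z^j`. -/
lemma aeval_euler_pow (t : Module.End ℂ (RatFunc ℂ))
    (ht : ∀ j : ℕ, t (RatFunc.X ^ j) = (j : ℂ) • RatFunc.X ^ j) (p : ℂ[X]) (j : ℕ) :
    aeval t p (RatFunc.X ^ j) = p.eval (j : ℂ) • RatFunc.X ^ j :=
  Module.End.aeval_apply_of_hasEigenvector
    (Module.End.hasEigenvector_iff.mpr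
      ⟨Module.End.mem_eigenspace_iff.mpr (ht j), pow_ne_zero _ RatFunc.X_ne_zero⟩)

lemma eq_zero_of_sum_eq_zero (m : ℕ) (t : Module.End ℂ (RatFunc ℂ))
    (ht : ∀ j : ℕ, t (RatFunc.X ^ j) = (j : ℂ) • RatFunc.X ^ j) (Q : ℕ → ℂ[X])
    (h : ∑ k ∈ range m, mulOp (RatFunc.X ^ k) * aeval t (Q k) = 0) :
    ∀ k < m, Q k = 0 := by
  intro k hk
  have heval : ∀ j : ℕ, (Q k).eval (j : ℂ) = 0 := by
    intro j
    have h1 := congrArg (fun F : Module.End ℂ (RatFunc ℂ) => F (RatFunc.X ^ j)) h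
    simp only [LinearMap.sum_apply, Module.End.mul_apply, aeval_euler_pow t ht, mulOp,
      LinearMap.mulLeft_apply, LinearMap.zero_apply, mul_smul_comm] at h1
    -- cancel `z^j` and read the relation in `ℂ[z]`
    have h2 : algebraMap ℂ[X] (RatFunc ℂ)
        (∑ i ∈ range m, (Q i).eval (j : ℂ) • (X : ℂ[X]) ^ i) * RatFunc.X ^ j = 0 := by
      rw [← h1, map_sum, Finset.sum_mul]
      refine Finset.sum_congr rfl fun i _ => ?_
      rw [Polynomial.smul_eq_C_mul, map_mul, map_pow, RatFunc.algebraMap_X, RatFunc.algebraMap_C,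
        RatFunc.smul_eq_C_mul, mul_assoc]
    have h3 := (mul_eq_zero.mp h2).resolve_right (pow_ne_zero _ RatFunc.X_ne_zero)
    have h4 := (map_eq_zero_iff _ (RatFunc.algebraMap_injective ℂ)).mp h3
    have h5 := congrArg (fun p : ℂ[X] => p.coeff k) h4
    simpa [Polynomial.finsetSum_coeff, Polynomial.coeff_X_pow, hk] using h5
  refine Polynomial.eq_zero_of_infinite_isRoot _ ?_
  refine (Set.infinite_range_of_injective (Nat.cast_injective (R := ℂ))).mono ?_
  rintro _ ⟨j, rfl⟩
  exact heval j

/-- for `D = Σ_{k=0}^m z^k P_k(θ)` with dual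
`D^∨ = Σ_{k=0}^m z^k P_k(−θ−k−1)`, the condition `D ∘ z = (−1)^n z ∘ D^∨`
holds if and only if `P_k(T) = (−1)^n P_k(−T−k)` in `ℂ[T]` for all `0 ≤ k ≤ m`.
Here `θ = z∂` is the Euler operator, and `Dz` is the derivative `d/dz` on
`ℂ(z)`, characterized as the `ℂ`-linear endomorphism satisfying the Leibniz
rule with `Dz z = 1`. -/
theorem stmt5 (n m : ℕ)
    (Dz : Module.End ℂ (RatFunc ℂ))
    (hLeib : ∀ f g : RatFunc ℂ, Dz (f * g) = f * Dz g + g * Dz f)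
    (hX : Dz RatFunc.X = 1)
    (P : ℕ → Polynomial ℂ)
    (θ : Module.End ℂ (RatFunc ℂ)) (hθ : θ = mulOp RatFunc.X * Dz) :
    ((∑ k ∈ range (m + 1), mulOp (RatFunc.X ^ k) * aeval θ (P k)) * mulOp RatFunc.X
        = ((-1 : ℂ) ^ n) • (mulOp RatFunc.X *
            ∑ k ∈ range (m + 1), mulOp (RatFunc.X ^ k) *
              aeval (-θ - (((k : ℂ) + 1) • 1 : Module.End ℂ (RatFunc ℂ))) (P k)))
    ↔ ∀ k ≤ m, P k = ((-1 : ℂ) ^ n) • (P k).comp (-X - C (k : ℂ)) := by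
  have happ : ∀ f, θ f = RatFunc.X * Dz f := fun f => by rw [hθ]; rfl
  have hcomm : θ * mulOp RatFunc.X = mulOp RatFunc.X * (θ + 1) := by
    ext f
    simp only [Module.End.mul_apply, LinearMap.add_apply, Module.End.one_apply, mulOp,
      LinearMap.mulLeft_apply, happ, hLeib, hX]
    ring
  have hD1 : Dz 1 = 0 := by simpa using hLeib 1 1
  have ht : ∀ j : ℕ, θ (RatFunc.X ^ j) = (j : ℂ) • RatFunc.X ^ j := by
    intro j
    induction j with
    | zero => simp [happ, hD1]
    | succ j ih =>
      have h1 := congrArg (fun F : Module.End ℂ (RatFunc ℂ) => F (RatFunc.X ^ j)) hcomm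
      simp only [Module.End.mul_apply, LinearMap.add_apply, Module.End.one_apply, mulOp,
        LinearMap.mulLeft_apply, ih] at h1
      rw [pow_succ', h1, mul_add, mul_smul_comm]
      push_cast
      rw [add_smul, one_smul]
  set Q : ℕ → ℂ[X] := fun k =>
    (P k).comp (X + 1) - ((-1 : ℂ) ^ n) • (P k).comp (-X - C ((k : ℂ) + 1)) with hQ
  have hmulX : ∀ k : ℕ, mulOp (RatFunc.X ^ k) * mulOp RatFunc.X
      = mulOp RatFunc.X * mulOp (RatFunc.X ^ k) := by
    intro k
    ext f
    simp only [Module.End.mul_apply, mulOp, LinearMap.mulLeft_apply]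
    ring
  have hdiff : (∑ k ∈ range (m + 1), mulOp (RatFunc.X ^ k) * aeval θ (P k)) * mulOp RatFunc.X
        - ((-1 : ℂ) ^ n) • (mulOp RatFunc.X *
            ∑ k ∈ range (m + 1), mulOp (RatFunc.X ^ k) *
              aeval (-θ - (((k : ℂ) + 1) • 1 : Module.End ℂ (RatFunc ℂ))) (P k))
      = mulOp RatFunc.X * ∑ k ∈ range (m + 1), mulOp (RatFunc.X ^ k) * aeval θ (Q k) := by
    rw [Finset.sum_mul, Finset.mul_sum, Finset.mul_sum, Finset.smul_sum,
      ← Finset.sum_sub_distrib]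
    refine Finset.sum_congr rfl fun k _ => ?_
    have hdual : aeval (-θ - (((k : ℂ) + 1) • 1 : Module.End ℂ (RatFunc ℂ))) (P k)
        = aeval θ ((P k).comp (-X - C ((k : ℂ) + 1))) := by
      rw [aeval_comp, map_sub, map_neg, aeval_X, aeval_C, Algebra.algebraMap_eq_smul_one]
    rw [hdual, mul_assoc, aeval_mul_of_commutation θ _ hcomm, ← mul_assoc, hmulX, hQ]
    simp only [map_sub, map_smul, mul_sub, mul_smul_comm, mul_assoc]
  have hinj : ∀ F : Module.End ℂ (RatFunc ℂ), mulOp RatFunc.X * F = 0 → F = 0 := by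
    intro F hF
    ext f
    have h1 := congrArg (fun G : Module.End ℂ (RatFunc ℂ) => G f) hF
    simp only [Module.End.mul_apply, mulOp, LinearMap.mulLeft_apply,
      LinearMap.zero_apply] at h1
    exact (mul_eq_zero.mp h1).resolve_left RatFunc.X_ne_zero
  -- the shift `T ↦ T + 1` turns the symmetry of `P k` into the vanishing of `Q k`
  have hshift : ∀ k, Q k
      = (P k - ((-1 : ℂ) ^ n) • (P k).comp (-X - C (k : ℂ))).comp (X + 1) := by
    intro k
    have : (-X - C (k : ℂ) : ℂ[X]).comp (X + 1) = -X - C ((k : ℂ) + 1) := by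
      simp only [sub_comp, neg_comp, X_comp, C_comp, C_add, C_1]
      ring
    rw [hQ, sub_comp, smul_comp, comp_assoc, this]
  have hQP : ∀ k, Q k = 0 ↔ P k = ((-1 : ℂ) ^ n) • (P k).comp (-X - C (k : ℂ)) := by
    intro k
    rw [← sub_eq_zero (a := P k), hshift]
    refine ⟨fun h => ?_, fun h => by rw [h, zero_comp]⟩
    have h1 := congrArg (fun p : ℂ[X] => p.comp (X - 1)) h
    simpa only [comp_assoc, add_comp, X_comp, one_comp, sub_add_cancel, comp_X, zero_comp]
      using h1
  rw [← sub_eq_zero, hdiff]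
  constructor
  · intro h k hk
    exact (hQP k).mp (eq_zero_of_sum_eq_zero (m + 1) θ ht Q (hinj _ h) k (Nat.lt_succ_of_le hk))
  · intro h
    rw [Finset.sum_eq_zero, mul_zero]
    intro k hk
    rw [(hQP k).mpr (h k (Nat.le_of_lt_succ (Finset.mem_range.mp hk))), map_zero, mul_zero]
end

section
/- Let n be odd and let D = θ^n + Σ_{k=1}^m z^k P_k(θ) with polynomials P_k ∈ ℂ[T] of degree at most n. Then D satisfies the Yifan-Yang condition D ∘ z = −z ∘ D^∨ if and only if each P_k has the form P_k(T) = Σ_{j=0}^{(n−1)/2} d_{k,j} (T + k/2)^{2j+1} for some constants d_{k,j} ∈ ℂ; i.e., D = θ^n + Σ_{k=1}^m z^k Σ_{j=0}^{(n−1)/2} d_{k,j}(θ + k/2)^{2j+1}. -/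
/-!
Since `θ ∘ z = z ∘ (θ + 1)`, one has `p(θ) ∘ z = z ∘ p(θ + 1)` for every polynomial `p`
(`aeval_mul_of_shift`). As `n` is odd, the leading terms `(θ + 1)^n` and `-(-θ - 1)^n` agree, so
after cancelling `z` on the left the Yifan-Yang condition reads `∑ z^k Q_k(θ) = 0` with
`Q_k(T) = P_k(T + 1) + P_k(-T - k - 1)`. Applying this to the eigenvectors `z^N` of `θ` gives
`Q_k(N) = 0` for all natural numbers `N`, hence `Q_k = 0` (`sum_pow_mul_aeval_eq_zero_iff`).
Finally `Q_k = 0` says that `P_k` is odd about `-k/2`, i.e. that its Taylor expansion there has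
only odd powers (`odd_expansion_iff`).
-/

open Finset Polynomial

/-- The equation `P(T + 1) + P(-T - c - 1) = 0`, i.e. `P(T) = -P(-T - c)`, says that `P` is an
odd polynomial in `T + c/2`. -/
lemma odd_expansion_iff (n : ℕ) (hn : Odd n) (P : ℂ[X]) (hdeg : P.natDegree ≤ n) (c : ℂ) :
    P.comp (X + 1) + P.comp (-X - C (c + 1)) = 0 ↔
      ∃ d : ℕ → ℂ, P = ∑ j ∈ range ((n - 1) / 2 + 1),
          C (d j) * (X + C (c / 2)) ^ (2 * j + 1) := by
  constructor
  · intro h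
    -- recentre at the fixed point `-c/2` of the reflection `T ↦ -T - c`
    set S : ℂ[X] := P.comp (X - C (c / 2)) with hS
    have hPS : P = S.comp (X + C (c / 2)) := by
      rw [hS, comp_assoc]; simp
    have hodd : S.comp (-X) = -S := by
      have h1 := congrArg (fun q : ℂ[X] => q.comp (X - C (c / 2) - 1)) h
      simp only [zero_comp] at h1
      rw [add_comp, comp_assoc, comp_assoc] at h1
      have e1 : (X + 1 : ℂ[X]).comp (X - C (c / 2) - 1) = X - C (c / 2) := by simp
      have e2 : (-X - C (c + 1) : ℂ[X]).comp (X - C (c / 2) - 1) = -X - C (c / 2) := by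
        have : (C (c + 1) : ℂ[X]) = C (c / 2) + C (c / 2) + 1 := by
          rw [← C_1, ← C_add, ← C_add]; congr 1; ring
        rw [this]
        simp
        ring
      rw [e1, e2] at h1
      have e3 : S.comp (-X) = P.comp (-X - C (c / 2)) := by
        rw [hS, comp_assoc]; simp
      rw [e3]
      linear_combination h1
    have hcoeff : ∀ i, Even i → S.coeff i = 0 := by
      intro i hi
      have h1 := congrArg (fun q : ℂ[X] => q.coeff i) hodd
      have hX : (-X : ℂ[X]) = C (-1) * X := by simp
      simp only [hX, comp_C_mul_X_coeff, hi.neg_one_pow, coeff_neg] at h1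
      linear_combination h1 / 2
    have hSdeg : S.natDegree < n + 1 := by
      have : S.natDegree ≤ n := by
        rw [hS, natDegree_comp]; simpa using hdeg
      omega
    refine ⟨fun j => S.coeff (2 * j + 1), ?_⟩
    have hSsum : S = ∑ j ∈ range ((n - 1) / 2 + 1), C (S.coeff (2 * j + 1)) * X ^ (2 * j + 1) := by
      obtain ⟨r, rfl⟩ := hn
      have hr : (2 * r + 1 - 1) / 2 + 1 = r + 1 := by omega
      have hsplit : ∀ N : ℕ, ∑ i ∈ range (2 * N), C (S.coeff i) * X ^ i =
          ∑ j ∈ range N, C (S.coeff (2 * j + 1)) * X ^ (2 * j + 1) := by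
        intro N
        induction N with
        | zero => simp
        | succ N ih =>
          rw [Nat.mul_succ, sum_range_succ, sum_range_succ, ih, sum_range_succ,
            hcoeff (2 * N) (by simp)]
          simp
      rw [hr, ← hsplit (r + 1)]
      exact S.as_sum_range_C_mul_X_pow' hSdeg
    conv_lhs => rw [hPS, hSsum]
    simp [Polynomial.sum_comp]
  · rintro ⟨d, rfl⟩
    simp only [Polynomial.sum_comp, mul_comp, C_comp, pow_comp, add_comp, X_comp]
    rw [← sum_add_distrib]
    refine sum_eq_zero fun j _ => ?_
    have e : (-X - C (c + 1) + C (c / 2) : ℂ[X]) = -(X + 1 + C (c / 2)) := by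
      have : (C (c + 1) : ℂ[X]) = C (c / 2) + C (c / 2) + 1 := by
        rw [← C_1, ← C_add, ← C_add]; congr 1; ring
      rw [this]; ring
    rw [e, Odd.neg_pow ⟨j, rfl⟩]
    ring

/-- Commutation rule `p(θ) ∘ z = z ∘ p(θ + 1)`, valid whenever `θ ∘ z = z ∘ (θ + 1)`. -/
lemma aeval_mul_of_shift {A : Type*} [Ring A] [Algebra ℂ A] (θ z : A)
    (h : θ * z = z * (θ + 1)) (p : ℂ[X]) :
    aeval θ p * z = z * aeval (θ + 1) p := by
  induction p using Polynomial.induction_on' with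
  | add p q hp hq => simp [add_mul, mul_add, hp, hq]
  | monomial i a =>
    have hp : θ ^ i * z = z * (θ + 1) ^ i := (SemiconjBy.pow_right (a := z) h.symm i).symm
    rw [aeval_monomial, aeval_monomial, mul_assoc, hp, ← mul_assoc, ← mul_assoc,
      Algebra.commutes]

/-- A complex polynomial vanishing at every natural number is zero. -/
lemma funext_of_infinite_nat (p : ℂ[X]) (h : ∀ N : ℕ, p.eval (N : ℂ) = 0) : p = 0 := by
  refine eq_zero_of_infinite_isRoot p ?_
  exact (Set.infinite_range_of_injective (Nat.cast_injective (R := ℂ))).mono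
    (by rintro _ ⟨N, rfl⟩; exact h N)

/-- The powers `z^k` are left linearly independent over `ℂ[θ]`: evaluating a relation on the
`θ`-eigenvectors `z^N` gives infinitely many zeros of every coefficient. -/
lemma sum_pow_mul_aeval_eq_zero_iff (s : Finset ℕ) (θ : Module.End ℂ (RatFunc ℂ))
    (hθ : ∀ N : ℕ, θ (RatFunc.X ^ N) = (N : ℂ) • RatFunc.X ^ N) (Q : ℕ → ℂ[X]) :
    ∑ k ∈ s, mulOp (RatFunc.X ^ k) * aeval θ (Q k) = 0 ↔ ∀ k ∈ s, Q k = 0 := by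
  constructor
  · intro h k hk
    refine funext_of_infinite_nat (Q k) fun N => ?_
    have h1 := congrArg (fun T : Module.End ℂ (RatFunc ℂ) => T (RatFunc.X ^ N)) h
    have hev : ∀ i, aeval θ (Q i) (RatFunc.X ^ N) = (Q i).eval (N : ℂ) • RatFunc.X ^ N :=
      fun i => Module.End.aeval_apply_of_hasEigenvector
        ⟨Module.End.mem_eigenspace_iff.2 (hθ N), pow_ne_zero N RatFunc.X_ne_zero⟩
    simp only [LinearMap.sum_apply, Module.End.mul_apply, hev, LinearMap.zero_apply, mulOp,
      LinearMap.mulLeft_apply] at h1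
    have h2 : (∑ i ∈ s, (C ((Q i).eval (N : ℂ)) * X ^ i) : ℂ[X]) * X ^ N = 0 := by
      apply RatFunc.algebraMap_injective ℂ
      rw [map_zero, ← h1, map_mul, map_sum, sum_mul]
      refine sum_congr rfl fun i _ => ?_
      simp only [map_mul, map_pow, RatFunc.algebraMap_X, RatFunc.algebraMap_C,
        RatFunc.smul_eq_C_mul]
      ring
    have h3 := (mul_eq_zero.1 h2).resolve_right (pow_ne_zero N X_ne_zero)
    have h4 := congrArg (fun q : ℂ[X] => q.coeff k) h3
    simpa [finsetSum_coeff, coeff_C_mul, coeff_X_pow, hk] using h4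
  · intro h
    exact sum_eq_zero fun k hk => by simp [h k hk]

/-- let `n` be odd and `D = θ^n + Σ_{k=1}^m z^k P_k(θ)` with
`deg P_k ≤ n`. Then `D` satisfies the Yifan-Yang condition `D ∘ z = −z ∘ D^∨`
(where `D^∨ = (−θ−1)^n + Σ_{k=1}^m z^k P_k(−θ−k−1)`) if and only if each `P_k`
has the form `P_k(T) = Σ_{j=0}^{(n−1)/2} d_{k,j} (T + k/2)^{2j+1}` for some
constants `d_{k,j} ∈ ℂ`. Here `θ = z∂` is the Euler operator and `Dz` is the
derivative `d/dz` on `ℂ(z)`, characterized as the `ℂ`-linear endomorphism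
satisfying the Leibniz rule with `Dz z = 1`. -/
theorem stmt6 (n m : ℕ) (hn : Odd n)
    (Dz : Module.End ℂ (RatFunc ℂ))
    (hLeib : ∀ f g : RatFunc ℂ, Dz (f * g) = f * Dz g + g * Dz f)
    (hX : Dz RatFunc.X = 1)
    (P : ℕ → Polynomial ℂ) (hdeg : ∀ k ∈ Icc 1 m, (P k).natDegree ≤ n)
    (θ : Module.End ℂ (RatFunc ℂ)) (hθ : θ = mulOp RatFunc.X * Dz) :
    ((θ ^ n + ∑ k ∈ Icc 1 m, mulOp (RatFunc.X ^ k) * aeval θ (P k)) * mulOp RatFunc.X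
        = -(mulOp RatFunc.X *
            ((-θ - 1) ^ n + ∑ k ∈ Icc 1 m, mulOp (RatFunc.X ^ k) *
              aeval (-θ - (((k : ℂ) + 1) • 1 : Module.End ℂ (RatFunc ℂ))) (P k))))
    ↔ ∀ k ∈ Icc 1 m, ∃ d : ℕ → ℂ,
        P k = ∑ j ∈ range ((n - 1) / 2 + 1),
          C (d j) * (X + C ((k : ℂ) / 2)) ^ (2 * j + 1) := by
  have hθz : θ * mulOp RatFunc.X = mulOp RatFunc.X * (θ + 1) := by
    ext f
    simp only [hθ, mulOp, Module.End.mul_apply, LinearMap.mulLeft_apply, LinearMap.add_apply,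
      Module.End.one_apply, hLeib, hX]
    ring
  have hD1 : Dz 1 = 0 := by
    have h := hLeib 1 1
    simp only [mul_one, one_mul] at h
    linear_combination -h
  have hθpow : ∀ N : ℕ, θ (RatFunc.X ^ N) = (N : ℂ) • RatFunc.X ^ N := by
    intro N
    induction N with
    | zero => simp [hθ, hD1]
    | succ N ih =>
      have h := congrArg (fun T : Module.End ℂ (RatFunc ℂ) => T (RatFunc.X ^ N)) hθz
      simp only [mulOp, Module.End.mul_apply, LinearMap.mulLeft_apply, LinearMap.add_apply,
        Module.End.one_apply, ih] at h
      rw [pow_succ', h, RatFunc.smul_eq_C_mul, RatFunc.smul_eq_C_mul]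
      push_cast
      rw [map_add, map_one]
      ring
  have hcomm : ∀ k : ℕ, mulOp (RatFunc.X ^ k) * mulOp RatFunc.X
      = mulOp RatFunc.X * mulOp (RatFunc.X ^ k) := by
    intro k
    ext f
    simp only [mulOp, Module.End.mul_apply, LinearMap.mulLeft_apply]
    ring
  have hinj : ∀ T : Module.End ℂ (RatFunc ℂ), mulOp RatFunc.X * T = 0 ↔ T = 0 := by
    refine fun T => ⟨fun h => ?_, fun h => by rw [h, mul_zero]⟩
    refine LinearMap.ext fun f => ?_
    have h1 := congrArg (fun T : Module.End ℂ (RatFunc ℂ) => T f) h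
    simpa [mulOp, RatFunc.X_ne_zero] using h1
  have hθn : θ ^ n * mulOp RatFunc.X = mulOp RatFunc.X * (θ + 1) ^ n := by
    simpa using aeval_mul_of_shift θ _ hθz (X ^ n)
  set Q : ℕ → ℂ[X] := fun k => (P k).comp (X + 1) + (P k).comp (-X - C ((k : ℂ) + 1)) with hQ
  have hQθ : ∀ k, aeval θ (Q k) = aeval (θ + 1) (P k)
      + aeval (-θ - (((k : ℂ) + 1) • 1 : Module.End ℂ (RatFunc ℂ))) (P k) := by
    intro k
    simp only [hQ, map_add, aeval_comp, aeval_X, map_one, map_sub, map_neg, aeval_C,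
      Algebra.algebraMap_eq_smul_one, add_smul, one_smul]
  have hneg : (-θ - 1) ^ n = -(θ + 1) ^ n := by
    rw [← hn.neg_pow, neg_add']
  have key : (θ ^ n + ∑ k ∈ Icc 1 m, mulOp (RatFunc.X ^ k) * aeval θ (P k)) * mulOp RatFunc.X
        + (mulOp RatFunc.X *
            ((-θ - 1) ^ n + ∑ k ∈ Icc 1 m, mulOp (RatFunc.X ^ k) *
              aeval (-θ - (((k : ℂ) + 1) • 1 : Module.End ℂ (RatFunc ℂ))) (P k)))
      = mulOp RatFunc.X * ∑ k ∈ Icc 1 m, mulOp (RatFunc.X ^ k) * aeval θ (Q k) := by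
    have hsum : (∑ k ∈ Icc 1 m, mulOp (RatFunc.X ^ k) * aeval θ (P k)) * mulOp RatFunc.X
        = mulOp RatFunc.X * ∑ k ∈ Icc 1 m, mulOp (RatFunc.X ^ k) * aeval (θ + 1) (P k) := by
      rw [sum_mul, mul_sum]
      refine sum_congr rfl fun k _ => ?_
      rw [mul_assoc, aeval_mul_of_shift θ _ hθz, ← mul_assoc, hcomm, mul_assoc]
    simp only [hQθ, mul_add, sum_add_distrib]
    rw [add_mul, hθn, hsum, hneg, mul_neg]
    abel
  rw [eq_neg_iff_add_eq_zero, key, hinj, sum_pow_mul_aeval_eq_zero_iff _ θ hθpow]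
  exact forall₂_congr fun k hk => odd_expansion_iff n hn (P k) (hdeg k hk) k
end

section
/- Let D = θ^n + Σ_{k=1}^m z^k P_k(θ) with polynomials P_k ∈ ℂ[T] of degree at most n, and write D = Σ_{i=0}^n c_i(z)θ^i with c_i ∈ ℂ[z] (so c_n(0) = 1). If D satisfies the Yifan-Yang condition D ∘ z = (−1)^n z ∘ D^∨, then 2 c_{n−1}(z) = n z c_n′(z). Consequently, the function P(z) determined by P(0) = 1 and P′(z)/P(z) = (2/n)·c_{n−1}(z)/(z c_n(z)) is the polynomial c_n(z): explicitly, P(z) = c_n(z) = 1 + Σ_{k=1}^m d_{k,n} z^k, where d_{k,n} is the coefficient of T^n in P_k(T). -/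
/-!
Every power `z ^ j` is an eigenvector of `θ` with eigenvalue `j`. Writing `D = ∑ k, z ^ k Q_k(θ)` with
`Q_0 = T ^ n` and `Q_k = P_k`, both hypotheses can therefore be tested on the powers `z ^ j`, where
they become identities between values of polynomials at infinitely many natural numbers, hence
identities of polynomials:

* the expansion `D = ∑ i, c_i θ ^ i` says that the coefficient of `z ^ k` in `c_i` is the
  coefficient of `T ^ i` in `Q_k` (`coeff_eq_of_expansion`);
* the Yifan-Yang condition says `Q_k(T) = (-1) ^ n Q_k(-T - k)` for each `k`
  (`reflection_of_yy`).

If `a`, `b` are the coefficients of `T ^ n`, `T ^ (n - 1)` in `Q_k`, comparing the coefficients of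
`T ^ (n - 1)` in the reflection identity gives `b = n k a - b` (`two_mul_coeff_of_reflection`),
which is `2 c_{n-1} = n z c_n'` read off at `z ^ k`.
-/


open Finset Polynomial

/-- The coefficients `Q_k` in `D = ∑ k, z ^ k Q_k(θ)`: the leading term `T ^ n` is included as
`Q_0`, and `Q_k = 0` for `k > m`. -/
noncomputable def fullCoeff (n m : ℕ) (P : ℕ → ℂ[X]) (k : ℕ) : ℂ[X] :=
  if k = 0 then X ^ n else if k ≤ m then P k else 0

lemma sum_range_succ_eq_add_sum_Icc {M : Type*} [AddCommMonoid M] (f : ℕ → M) (m : ℕ) :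
    ∑ k ∈ range (m + 1), f k = f 0 + ∑ k ∈ Icc 1 m, f k := by
  induction m with
  | zero => simp
  | succ m ih => rw [sum_range_succ, ih, sum_Icc_succ_top (by omega), add_assoc]

/-- A polynomial identity that holds at all positive integers holds identically. -/
lemma poly_eq_of_eval_nat_succ {p q : ℂ[X]}
    (h : ∀ j : ℕ, p.eval ((j : ℂ) + 1) = q.eval ((j : ℂ) + 1)) : p = q := by
  refine Polynomial.eq_of_infinite_eval_eq p q
    (Set.Infinite.mono (s := Set.range fun j : ℕ => (j : ℂ) + 1) ?_ ?_)
  · rintro _ ⟨j, rfl⟩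
    exact h j
  · refine Set.infinite_range_of_injective fun a b hab => ?_
    simpa using hab

/-- Substituting `-T - k` is the Taylor shift by `k` of `Q(-T)`, so the coefficient of `T ^ (n - 1)`
in `Q(-T - k)` is a value of the Hasse derivative of order `n - 1`, which is linear. -/
lemma two_mul_coeff_of_reflection {n : ℕ} (hn : 1 ≤ n) {Q : ℂ[X]} (hQ : Q.natDegree ≤ n) (k : ℂ)
    (h : Q = C ((-1) ^ n) * Q.comp (-X - C k)) :
    2 * Q.coeff (n - 1) = n * k * Q.coeff n := by
  obtain ⟨r, rfl⟩ : ∃ r, n = r + 1 := ⟨n - 1, by omega⟩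
  have hcomp : Q.comp (-X - C k) = taylor k (Q.comp (-X)) := by
    rw [taylor_apply, comp_assoc]
    congr 1
    simp [sub_eq_add_neg, add_comm]
  have hdeg : (Q.comp (-X)).natDegree ≤ r + 1 := by simpa [natDegree_comp] using hQ
  have hlin : (hasseDeriv r (Q.comp (-X))).natDegree ≤ 1 :=
    (natDegree_hasseDeriv_le _ _).trans (by omega)
  have hneg : ∀ i, (Q.comp (-X)).coeff i = Q.coeff i * (-1) ^ i := fun i => by
    simpa using comp_C_mul_X_coeff (p := Q) (r := (-1 : ℂ)) (n := i)
  have h1 := congrArg (fun p : ℂ[X] => p.coeff r) h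
  simp only [coeff_C_mul, hcomp, taylor_coeff] at h1
  rw [eval_eq_sum_range' (Nat.lt_succ_of_le hlin)] at h1
  simp only [sum_range_succ, range_zero, sum_empty, hasseDeriv_coeff, hneg] at h1
  have hs : ((-1 : ℂ) ^ r) * (-1) ^ r = 1 := by rw [← mul_pow]; simp
  have hchoose : ((r + 1).choose r : ℂ) = r + 1 := by
    rw [Nat.choose_succ_self_right]; push_cast; rfl
  simp only [zero_add, Nat.choose_self, hchoose, add_comm 1 r, pow_succ, pow_zero] at h1
  simp only [Nat.add_sub_cancel]
  push_cast at h1 ⊢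
  linear_combination h1 + (-Q.coeff r + (r + 1) * k * Q.coeff (r + 1)) * hs

section Euler

variable {Dz θ : Module.End ℂ (RatFunc ℂ)}

lemma euler_X_pow (hLeib : ∀ f g : RatFunc ℂ, Dz (f * g) = f * Dz g + g * Dz f)
    (hX : Dz RatFunc.X = 1) (hθ : θ = mulOp RatFunc.X * Dz) (j : ℕ) :
    θ (RatFunc.X ^ j) = (j : ℂ) • RatFunc.X ^ j := by
  subst hθ
  induction j with
  | zero =>
    have h1 : Dz 1 = 0 := by simpa using hLeib 1 1
    simp [mulOp, h1]
  | succ j ih =>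
    simp only [mulOp, Module.End.mul_apply, LinearMap.mulLeft_apply, Algebra.smul_def] at ih ⊢
    rw [pow_succ, hLeib, hX]
    rw [Nat.cast_succ, map_add, map_one]
    linear_combination RatFunc.X * ih

lemma aeval_X_pow_of_eigen {φ : Module.End ℂ (RatFunc ℂ)} {μ : ℂ} {j : ℕ}
    (h : φ (RatFunc.X ^ j) = μ • RatFunc.X ^ j) (p : ℂ[X]) :
    aeval φ p (RatFunc.X ^ j) = p.eval μ • RatFunc.X ^ j :=
  Module.End.aeval_apply_of_hasEigenvector
    ⟨Module.End.mem_eigenspace_iff.mpr h, pow_ne_zero _ RatFunc.X_ne_zero⟩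

lemma coeff_eq_of_expansion {n m : ℕ} (Q c : ℕ → ℂ[X])
    (hQm : ∀ k, m < k → Q k = 0)
    (hev : ∀ j : ℕ, θ (RatFunc.X ^ j) = (j : ℂ) • RatFunc.X ^ j)
    (hc : ∑ k ∈ range (m + 1), mulOp (RatFunc.X ^ k) * aeval θ (Q k)
      = ∑ i ∈ range (n + 1), mulOp (algebraMap ℂ[X] (RatFunc ℂ) (c i)) * θ ^ i)
    {i : ℕ} (hi : i ≤ n) (k : ℕ) : (c i).coeff k = (Q k).coeff i := by
  have key : ∀ j : ℕ, ∑ k ∈ range (m + 1), C ((Q k).eval (j : ℂ)) * X ^ k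
      = ∑ i ∈ range (n + 1), C ((j : ℂ) ^ i) * c i := by
    intro j
    have h := LinearMap.congr_fun hc (RatFunc.X ^ j)
    have hpow : ∀ i : ℕ, (θ ^ i) (RatFunc.X ^ j) = ((j : ℂ) ^ i) • RatFunc.X ^ j := fun i => by
      simpa using aeval_X_pow_of_eigen (hev j) (X ^ i)
    simp only [LinearMap.sum_apply, Module.End.mul_apply, hpow, aeval_X_pow_of_eigen (hev j),
      mulOp, LinearMap.mulLeft_apply, mul_smul_comm, ← smul_mul_assoc, ← sum_mul] at h
    have h' := mul_right_cancel₀ (pow_ne_zero j RatFunc.X_ne_zero) h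
    apply RatFunc.algebraMap_injective ℂ
    simpa [map_sum, RatFunc.algebraMap_C, RatFunc.algebraMap_X, RatFunc.smul_eq_C_mul] using h'
  have hpoly : Q k = ∑ i ∈ range (n + 1), C ((c i).coeff k) * X ^ i := by
    refine poly_eq_of_eval_nat_succ fun j => ?_
    have h := congrArg (fun p : ℂ[X] => p.coeff k) (key (j + 1))
    simp only [finsetSum_coeff, coeff_C_mul, coeff_X_pow, mul_ite, mul_one, mul_zero,
      sum_ite_eq, mem_range] at h
    have hl : (if k < m + 1 then (Q k).eval ((j + 1 : ℕ) : ℂ) else 0)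
        = (Q k).eval ((j : ℂ) + 1) := by
      split_ifs with hk
      · push_cast; rfl
      · rw [hQm k (by omega)]; simp
    rw [hl] at h
    rw [h, eval_finsetSum]
    refine sum_congr rfl fun i _ => ?_
    simp only [eval_mul, eval_C, eval_pow, eval_X, Nat.cast_add, Nat.cast_one]
    ring
  rw [hpoly]
  simp [coeff_X_pow, Nat.lt_succ_of_le hi]

lemma reflection_of_yy {n m : ℕ} (Q : ℕ → ℂ[X]) (hQm : ∀ k, m < k → Q k = 0)
    (hev : ∀ j : ℕ, θ (RatFunc.X ^ j) = (j : ℂ) • RatFunc.X ^ j)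
    (hYY : (∑ k ∈ range (m + 1), mulOp (RatFunc.X ^ k) * aeval θ (Q k)) * mulOp RatFunc.X
      = ((-1 : ℂ) ^ n) • (mulOp RatFunc.X * ∑ k ∈ range (m + 1), mulOp (RatFunc.X ^ k) *
          aeval (-θ - (((k : ℂ) + 1) • 1 : Module.End ℂ (RatFunc ℂ))) (Q k)))
    (k : ℕ) : Q k = C ((-1) ^ n) * (Q k).comp (-X - C (k : ℂ)) := by
  rcases lt_or_ge m k with hk | hk
  · simp [hQm k hk]
  refine poly_eq_of_eval_nat_succ fun j => ?_
  have h := LinearMap.congr_fun hYY (RatFunc.X ^ j)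
  have hdual : ∀ k : ℕ, (-θ - (((k : ℂ) + 1) • 1 : Module.End ℂ (RatFunc ℂ))) (RatFunc.X ^ j)
      = (-((j : ℂ) + 1) - k) • RatFunc.X ^ j := fun k => by
    simp only [LinearMap.sub_apply, LinearMap.neg_apply, LinearMap.smul_apply,
      Module.End.one_apply, hev]
    module
  have hXj : mulOp RatFunc.X (RatFunc.X ^ j) = RatFunc.X ^ (j + 1) := by
    simp [mulOp, pow_succ']
  rw [Module.End.mul_apply, hXj] at h
  simp only [LinearMap.sum_apply, LinearMap.smul_apply, Module.End.mul_apply,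
    aeval_X_pow_of_eigen (hdual _), aeval_X_pow_of_eigen (hev _)] at h
  simp only [mulOp, LinearMap.mulLeft_apply, mul_smul_comm, ← smul_mul_assoc, ← sum_mul] at h
  have h' := mul_right_cancel₀ (pow_ne_zero (j + 1) RatFunc.X_ne_zero)
    (h.trans (show _ = (((-1 : ℂ) ^ n) • ∑ k ∈ range (m + 1),
      (Q k).eval (-((j : ℂ) + 1) - k) • (RatFunc.X : RatFunc ℂ) ^ k) * RatFunc.X ^ (j + 1) by
        simp only [Algebra.smul_def]; ring))
  have hp : ∑ k ∈ range (m + 1), C ((Q k).eval ((j : ℂ) + 1)) * X ^ k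
      = C ((-1) ^ n) * ∑ k ∈ range (m + 1), C ((Q k).eval (-((j : ℂ) + 1) - k)) * X ^ k := by
    apply RatFunc.algebraMap_injective ℂ
    simpa [map_sum, RatFunc.algebraMap_C, RatFunc.algebraMap_X, RatFunc.smul_eq_C_mul] using h'
  have hcoeff := congrArg (fun p : ℂ[X] => p.coeff k) hp
  simp only [finsetSum_coeff, coeff_C_mul, coeff_X_pow, mul_ite, mul_one, mul_zero,
    sum_ite_eq, mem_range, Nat.lt_succ_of_le hk, if_true] at hcoeff
  simpa [eval_comp] using hcoeff

end Euler

/-- let `D = θ^n + Σ_{k=1}^m z^k P_k(θ)` with `deg P_k ≤ n`, and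
write `D = Σ_{i=0}^n cᵢ(z) θ^i` with `cᵢ ∈ ℂ[z]`. If `D` satisfies the
Yifan-Yang condition `D ∘ z = (−1)^n z ∘ D^∨`
(with `D^∨ = (−θ−1)^n + Σ_{k=1}^m z^k P_k(−θ−k−1)`), then
`2 c_{n−1}(z) = n z c_n′(z)`; consequently the function `P(z)` with `P(0) = 1`
and `P′/P = (2/n) c_{n−1}/(z c_n)` is the polynomial
`c_n(z) = 1 + Σ_{k=1}^m d_{k,n} z^k`, where `d_{k,n}` is the coefficient of
`T^n` in `P_k(T)`. Here `θ = z∂` is the Euler operator and `Dz` is the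
derivative `d/dz` on `ℂ(z)`, characterized as the `ℂ`-linear endomorphism
satisfying the Leibniz rule with `Dz z = 1`. -/
theorem stmt8 (n m : ℕ) (hn : 1 ≤ n)
    (Dz : Module.End ℂ (RatFunc ℂ))
    (hLeib : ∀ f g : RatFunc ℂ, Dz (f * g) = f * Dz g + g * Dz f)
    (hX : Dz RatFunc.X = 1)
    (P : ℕ → Polynomial ℂ) (hdeg : ∀ k ∈ Icc 1 m, (P k).natDegree ≤ n)
    (θ : Module.End ℂ (RatFunc ℂ)) (hθ : θ = mulOp RatFunc.X * Dz)
    (c : ℕ → Polynomial ℂ)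
    (hc : θ ^ n + ∑ k ∈ Icc 1 m, mulOp (RatFunc.X ^ k) * aeval θ (P k)
        = ∑ i ∈ range (n + 1),
            mulOp (algebraMap (Polynomial ℂ) (RatFunc ℂ) (c i)) * θ ^ i)
    (hYY : (θ ^ n + ∑ k ∈ Icc 1 m, mulOp (RatFunc.X ^ k) * aeval θ (P k))
          * mulOp RatFunc.X
        = ((-1 : ℂ) ^ n) • (mulOp RatFunc.X *
            ((-θ - 1) ^ n + ∑ k ∈ Icc 1 m, mulOp (RatFunc.X ^ k) *
              aeval (-θ - (((k : ℂ) + 1) • 1 : Module.End ℂ (RatFunc ℂ))) (P k)))) :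
    2 * c (n - 1) = (n : Polynomial ℂ) * X * derivative (c n)
      ∧ c n = 1 + ∑ k ∈ Icc 1 m, C ((P k).coeff n) * X ^ k := by
  have hev := euler_X_pow hLeib hX hθ
  set Q := fullCoeff n m P with hQdef
  have hQ0 : Q 0 = X ^ n := by simp [hQdef, fullCoeff]
  have hQP : ∀ k ∈ Icc 1 m, Q k = P k := fun k hk => by
    obtain ⟨h1, h2⟩ := mem_Icc.mp hk
    simp [hQdef, fullCoeff, h2, Nat.one_le_iff_ne_zero.mp h1]
  have hQm : ∀ k, m < k → Q k = 0 := fun k hk => by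
    simp [hQdef, fullCoeff, Nat.not_le.mpr hk, Nat.ne_zero_of_lt hk]
  have hQdeg : ∀ k, (Q k).natDegree ≤ n := fun k => by
    rcases Nat.eq_zero_or_pos k with rfl | hk
    · simp [hQ0]
    · rcases lt_or_ge m k with hkm | hkm
      · simp [hQm k hkm]
      · rw [hQP k (mem_Icc.mpr ⟨hk, hkm⟩)]
        exact hdeg k (mem_Icc.mpr ⟨hk, hkm⟩)
  have hD : θ ^ n + ∑ k ∈ Icc 1 m, mulOp (RatFunc.X ^ k) * aeval θ (P k)
      = ∑ k ∈ range (m + 1), mulOp (RatFunc.X ^ k) * aeval θ (Q k) := by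
    rw [sum_range_succ_eq_add_sum_Icc, hQ0]
    congr 1
    · ext f; simp [mulOp]
    · exact sum_congr rfl fun k hk => by rw [hQP k hk]
  have hDdual : (-θ - 1) ^ n + ∑ k ∈ Icc 1 m, mulOp (RatFunc.X ^ k) *
        aeval (-θ - (((k : ℂ) + 1) • 1 : Module.End ℂ (RatFunc ℂ))) (P k)
      = ∑ k ∈ range (m + 1), mulOp (RatFunc.X ^ k) *
        aeval (-θ - (((k : ℂ) + 1) • 1 : Module.End ℂ (RatFunc ℂ))) (Q k) := by
    rw [sum_range_succ_eq_add_sum_Icc, hQ0]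
    congr 1
    · ext f; simp [mulOp]
    · exact sum_congr rfl fun k hk => by rw [hQP k hk]
  rw [hD] at hc hYY
  rw [hDdual] at hYY
  have hcoeff := fun {i : ℕ} (hi : i ≤ n) (k : ℕ) =>
    coeff_eq_of_expansion Q c hQm hev hc hi k
  constructor
  · ext k
    have h := two_mul_coeff_of_reflection hn (hQdeg k) k (reflection_of_yy Q hQm hev hYY k)
    rw [← hcoeff (Nat.sub_le n 1), ← hcoeff le_rfl] at h
    rw [show (2 : ℂ[X]) = C 2 from rfl, ← C_eq_natCast, mul_assoc, coeff_C_mul, coeff_C_mul, h]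
    cases k with
    | zero => simp
    | succ k => rw [coeff_X_mul, coeff_derivative]; push_cast; ring
  · have hsum : c n = ∑ k ∈ range (m + 1), C ((Q k).coeff n) * X ^ k := by
      ext k
      rw [hcoeff le_rfl]
      simp only [finsetSum_coeff, coeff_C_mul, coeff_X_pow, mul_ite, mul_one, mul_zero,
        sum_ite_eq, mem_range]
      split_ifs with hk
      · rfl
      · rw [hQm k (by omega), coeff_zero]
    rw [hsum, sum_range_succ_eq_add_sum_Icc, hQ0]
    congr 1
    · simp
    · exact sum_congr rfl fun k hk => by rw [hQP k hk]
end

section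
/- Let I ⊆ ℝ be an open interval and let y_0, y_1, y_2, y_3 : I → ℝ be three-times differentiable functions with y_0 nonvanishing on I; set t = y_1/y_0 and assume t′ is nonvanishing on I. If y_0 y_3′ − y_0′ y_3 = y_1 y_2′ − y_1′ y_2 on I, then D_t(D_t(y_3/y_0)) = t · D_t(D_t(y_2/y_0)) on I. -/
/-!
Put `t = y₁/y₀`, `u = y₂/y₀`, `v = y₃/y₀`. Dividing the Wronskian relation by `y₀²` turns it into
`v′ = t u′ − t′ u`, i.e. `D_t v = t · D_t u − u` on `I`. Differentiating, and using
`t′ · D_t u = u′`, two terms cancel and `(D_t v)′ = t · (D_t u)′`; dividing by `t′` gives the claim.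
-/

/-- `DerWrt t f` is the derivative `D_t f = f′/t′` of `f` with respect to the
local coordinate `t`. -/
noncomputable def DerWrt (t f : ℝ → ℝ) : ℝ → ℝ := fun x => deriv f x / deriv t x

/-- `f` is three-times differentiable at every point of `I`. -/
def ThreeDiffOn (f : ℝ → ℝ) (I : Set ℝ) : Prop :=
  (∀ x ∈ I, DifferentiableAt ℝ f x) ∧ (∀ x ∈ I, DifferentiableAt ℝ (deriv f) x)
    ∧ (∀ x ∈ I, DifferentiableAt ℝ (deriv (deriv f)) x)

lemma ThreeDiffOn.deriv_div {f g : ℝ → ℝ} {I : Set ℝ} (hf : ThreeDiffOn f I)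
    (hg : ThreeDiffOn g I) (hg0 : ∀ x ∈ I, g x ≠ 0) {x : ℝ} (hx : x ∈ I) :
    deriv (fun s => f s / g s) x = (deriv f x * g x - f x * deriv g x) / g x ^ 2 :=
  deriv_fun_div (hf.1 x hx) (hg.1 x hx) (hg0 x hx)

lemma ThreeDiffOn.differentiableAt_deriv_div {f g : ℝ → ℝ} {I : Set ℝ} (hI : IsOpen I)
    (hf : ThreeDiffOn f I) (hg : ThreeDiffOn g I) (hg0 : ∀ x ∈ I, g x ≠ 0) {x : ℝ} (hx : x ∈ I) :
    DifferentiableAt ℝ (deriv (fun s => f s / g s)) x := by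
  have hev : deriv (fun s => f s / g s) =ᶠ[nhds x]
      fun s => (deriv f s * g s - f s * deriv g s) / g s ^ 2 := by
    filter_upwards [hI.mem_nhds hx] with s hs using hf.deriv_div hg hg0 hs
  refine DifferentiableAt.congr_of_eventuallyEq ?_ hev
  exact (((hf.2.1 x hx).fun_mul (hg.1 x hx)).fun_sub ((hf.1 x hx).fun_mul (hg.2.1 x hx))).fun_div
    ((hg.1 x hx).fun_pow 2) (pow_ne_zero 2 (hg0 x hx))

/-- with `t = y₁/y₀` (`y₀` nonvanishing, `t′` nonvanishing), the
Wronskian relation `y₀y₃′ − y₀′y₃ = y₁y₂′ − y₁′y₂` on an open interval `I`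
implies `D_t(D_t(y₃/y₀)) = t · D_t(D_t(y₂/y₀))` on `I`. -/
theorem stmt11 (I : Set ℝ) (hI : IsOpen I)
    (y0 y1 y2 y3 : ℝ → ℝ)
    (h0 : ThreeDiffOn y0 I) (h1 : ThreeDiffOn y1 I)
    (h2 : ThreeDiffOn y2 I) (h3 : ThreeDiffOn y3 I)
    (hy0 : ∀ x ∈ I, y0 x ≠ 0)
    (ht' : ∀ x ∈ I, deriv (fun s => y1 s / y0 s) x ≠ 0)
    (hW : ∀ x ∈ I, y0 x * deriv y3 x - deriv y0 x * y3 x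
        = y1 x * deriv y2 x - deriv y1 x * y2 x) :
    ∀ x ∈ I,
      DerWrt (fun s => y1 s / y0 s)
          (DerWrt (fun s => y1 s / y0 s) (fun s => y3 s / y0 s)) x
        = (y1 x / y0 x) * DerWrt (fun s => y1 s / y0 s)
            (DerWrt (fun s => y1 s / y0 s) (fun s => y2 s / y0 s)) x := by
  intro x hx
  have hu : DifferentiableAt ℝ (fun s => y2 s / y0 s) x :=
    (h2.1 x hx).fun_div (h0.1 x hx) (hy0 x hx)
  have ht : DifferentiableAt ℝ (fun s => y1 s / y0 s) x :=
    (h1.1 x hx).fun_div (h0.1 x hx) (hy0 x hx)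
  have hDu : DifferentiableAt ℝ (DerWrt (fun s => y1 s / y0 s) (fun s => y2 s / y0 s)) x :=
    (h2.differentiableAt_deriv_div hI h0 hy0 hx).fun_div
      (h1.differentiableAt_deriv_div hI h0 hy0 hx) (ht' x hx)
  -- The Wronskian relation in the form `D_t v = t · D_t u - u`, valid on all of `I`.
  have hev : DerWrt (fun s => y1 s / y0 s) (fun s => y3 s / y0 s) =ᶠ[nhds x]
      fun s => (y1 s / y0 s) * DerWrt (fun s => y1 s / y0 s) (fun s => y2 s / y0 s) s
        - y2 s / y0 s := by
    filter_upwards [hI.mem_nhds hx] with s hs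
    have hv : deriv (fun s => y3 s / y0 s) s
        = y1 s / y0 s * deriv (fun s => y2 s / y0 s) s
          - deriv (fun s => y1 s / y0 s) s * (y2 s / y0 s) := by
      rw [h3.deriv_div h0 hy0 hs, h2.deriv_div h0 hy0 hs, h1.deriv_div h0 hy0 hs]
      have h := hy0 s hs
      field_simp
      linear_combination y0 s * hW s hs
    have hts := ht' s hs
    simp only [DerWrt]
    rw [hv, sub_div, mul_div_assoc, mul_div_cancel_left₀ _ hts]
  have hcancel : deriv (fun s => y1 s / y0 s) x
      * DerWrt (fun s => y1 s / y0 s) (fun s => y2 s / y0 s) x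
        = deriv (fun s => y2 s / y0 s) x :=
    mul_div_cancel₀ _ (ht' x hx)
  have hderiv : deriv (DerWrt (fun s => y1 s / y0 s) (fun s => y3 s / y0 s)) x
      = y1 x / y0 x * deriv (DerWrt (fun s => y1 s / y0 s) (fun s => y2 s / y0 s)) x := by
    rw [hev.deriv_eq, deriv_fun_sub (ht.fun_mul hDu) hu, deriv_fun_mul ht hDu, hcancel]
    ring
  rw [DerWrt, hderiv, mul_div_assoc]
  rfl
end

section
/- Proposition (a): Let I ⊆ ℝ be an open interval and let y_0, y_1, y_2, y_3, y_4 : I → ℝ be three-times differentiable functions with y_0 nonvanishing on I; set t = y_1/y_0 and assume t′ is nonvanishing on I. If y_0 y_3′ − y_0′ y_3 = y_1 y_2′ − y_1′ y_2 and 2(y_0 y_4′ − y_0′ y_4) = y_1 y_3′ − y_1′ y_3 on I, then D_t(D_t(y_4/y_0)) = (t²/2) · D_t(D_t(y_2/y_0)) on I. -/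
theorem hasDerivAt_quot {I : Set ℝ} {f g : ℝ → ℝ} (hf : ThreeDiffOn f I) (hg : ThreeDiffOn g I)
    (hg0 : ∀ x ∈ I, g x ≠ 0) {x : ℝ} (hx : x ∈ I) :
    HasDerivAt (fun s => f s / g s) ((deriv f x * g x - f x * deriv g x) / g x ^ 2) x :=
  (hf.1 x hx).hasDerivAt.div (hg.1 x hx).hasDerivAt (hg0 x hx)

theorem differentiableAt_deriv_quot {I : Set ℝ} (hI : IsOpen I) {f g : ℝ → ℝ}
    (hf : ThreeDiffOn f I) (hg : ThreeDiffOn g I)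
    (hg0 : ∀ x ∈ I, g x ≠ 0) {x : ℝ} (hx : x ∈ I) :
    DifferentiableAt ℝ (deriv (fun s => f s / g s)) x := by
  have hev : deriv (fun s => f s / g s) =ᶠ[nhds x]
      fun s => (deriv f s * g s - f s * deriv g s) / g s ^ 2 := by
    filter_upwards [hI.mem_nhds hx] with s hs
    exact (hasDerivAt_quot hf hg hg0 hs).deriv
  refine DifferentiableAt.congr_of_eventuallyEq ?_ hev
  exact (((hf.2.1 x hx).mul (hg.1 x hx)).sub ((hf.1 x hx).mul (hg.2.1 x hx))).div
    ((hg.1 x hx).pow 2) (pow_ne_zero 2 (hg0 x hx))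

/-- Proposition (a): with `t = y₁/y₀` (`y₀` nonvanishing, `t′`
nonvanishing), the Wronskian relations `y₀y₃′ − y₀′y₃ = y₁y₂′ − y₁′y₂` and
`2(y₀y₄′ − y₀′y₄) = y₁y₃′ − y₁′y₃` on an open interval `I` imply
`D_t(D_t(y₄/y₀)) = (t²/2) · D_t(D_t(y₂/y₀))` on `I`. -/
theorem stmt12 (I : Set ℝ) (hI : IsOpen I)
    (y0 y1 y2 y3 y4 : ℝ → ℝ)
    (h0 : ThreeDiffOn y0 I) (h1 : ThreeDiffOn y1 I)
    (h2 : ThreeDiffOn y2 I) (h3 : ThreeDiffOn y3 I) (h4 : ThreeDiffOn y4 I)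
    (hy0 : ∀ x ∈ I, y0 x ≠ 0)
    (ht' : ∀ x ∈ I, deriv (fun s => y1 s / y0 s) x ≠ 0)
    (hW1 : ∀ x ∈ I, y0 x * deriv y3 x - deriv y0 x * y3 x
        = y1 x * deriv y2 x - deriv y1 x * y2 x)
    (hW2 : ∀ x ∈ I, 2 * (y0 x * deriv y4 x - deriv y0 x * y4 x)
        = y1 x * deriv y3 x - deriv y1 x * y3 x) :
    ∀ x ∈ I,
      DerWrt (fun s => y1 s / y0 s)
          (DerWrt (fun s => y1 s / y0 s) (fun s => y4 s / y0 s)) x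
        = ((y1 x / y0 x) ^ 2 / 2) * DerWrt (fun s => y1 s / y0 s)
            (DerWrt (fun s => y1 s / y0 s) (fun s => y2 s / y0 s)) x := by
  intro x hx
  set t : ℝ → ℝ := fun s => y1 s / y0 s with ht
  set u2 : ℝ → ℝ := fun s => y2 s / y0 s with hu2
  set u3 : ℝ → ℝ := fun s => y3 s / y0 s with hu3
  set u4 : ℝ → ℝ := fun s => y4 s / y0 s with hu4
  have d1 : ∀ s ∈ I, deriv t s = _ := fun s hs => (hasDerivAt_quot h1 h0 hy0 hs).deriv
  have d2 : ∀ s ∈ I, deriv u2 s = _ := fun s hs => (hasDerivAt_quot h2 h0 hy0 hs).deriv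
  have d3 : ∀ s ∈ I, deriv u3 s = _ := fun s hs => (hasDerivAt_quot h3 h0 hy0 hs).deriv
  have d4 : ∀ s ∈ I, deriv u4 s = _ := fun s hs => (hasDerivAt_quot h4 h0 hy0 hs).deriv
  -- The Wronskian relations divided by `y₀²`.
  have e3 : ∀ s ∈ I, deriv u3 s = t s * deriv u2 s - deriv t s * u2 s := by
    intro s hs
    have hy := hy0 s hs
    rw [d3 s hs, d2 s hs, d1 s hs]
    simp only [ht, hu2]
    field_simp
    linear_combination y0 s * hW1 s hs
  have e4 : ∀ s ∈ I, 2 * deriv u4 s = t s * deriv u3 s - deriv t s * u3 s := by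
    intro s hs
    have hy := hy0 s hs
    rw [d4 s hs, d3 s hs, d1 s hs]
    simp only [ht, hu3]
    field_simp
    linear_combination y0 s * hW2 s hs
  have hev : DerWrt t u4 =ᶠ[nhds x]
      fun s => (t s ^ 2 * DerWrt t u2 s - t s * u2 s - u3 s) / 2 := by
    filter_upwards [hI.mem_nhds hx] with s hs
    have hs' : deriv t s ≠ 0 := ht' s hs
    have a3 := e3 s hs
    have a4 := e4 s hs
    simp only [DerWrt]
    field_simp
    linear_combination a4 + t s * a3
  have ht1 : HasDerivAt t (deriv t x) x :=
    (hasDerivAt_quot h1 h0 hy0 hx).differentiableAt.hasDerivAt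
  have hu2' : HasDerivAt u2 (deriv u2 x) x :=
    (hasDerivAt_quot h2 h0 hy0 hx).differentiableAt.hasDerivAt
  have hu3' : HasDerivAt u3 (deriv u3 x) x :=
    (hasDerivAt_quot h3 h0 hy0 hx).differentiableAt.hasDerivAt
  have hD : HasDerivAt (DerWrt t u2) (deriv (DerWrt t u2) x) x :=
    ((differentiableAt_deriv_quot hI h2 h0 hy0 hx).div
      (differentiableAt_deriv_quot hI h1 h0 hy0 hx) (ht' x hx)).hasDerivAt
  have key : deriv (DerWrt t u4) x = _ :=
    hev.deriv_eq.trans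
      (((((ht1.pow 2).mul hD).sub (ht1.mul hu2')).sub hu3').div_const 2).deriv
  have hx' : deriv t x ≠ 0 := ht' x hx
  have hDx : DerWrt t u2 x * deriv t x = deriv u2 x := div_mul_cancel₀ _ hx'
  change deriv (DerWrt t u4) x / deriv t x
    = (t x ^ 2 / 2) * (deriv (DerWrt t u2) x / deriv t x)
  rw [key, e3 x hx, ← hDx]
  simp only [Pi.pow_apply]
  field_simp
  push_cast
  ring
end

section
/- Define the sequence a_n ∈ ℚ by a_n = C(2n,n)² · Σ_{k=0}^{n} C(2k,k)^4 C(2n−2k, n−k)^4 · (1 + 8k(H_{2k} − H_k − H_{2n−2k} + H_{n−k})). Then, with the convention a_{−1} = 0, for every n ≥ 1: n^7 a_n = 128(2n−1)^3 (8(n−1)^4 + 16(n−1)^3 + 20(n−1)^2 + 12(n−1) + 3) a_{n−1} − 2^{20} (n−1)^3 (2n−3)^2 (2n−1)^2 a_{n−2}. Equivalently, the power series y_0 = Σ_{n≥0} a_n z^n is annihilated by the seventh-order operator θ^7 − 128z(2θ+1)^3(8θ^4+16θ^3+20θ^2+12θ+3) + 2^{20} z^2 (θ+1)^3 (2θ+1)^2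 (2θ+3)^2, where θ = z d/dz. -/
/-!
Write `c(x) = Γ(2x+1)/Γ(x+1)²` for the analytic continuation of the central binomial coefficient.
Its logarithmic derivative at a natural number `k` is `2(H_{2k} - H_k)`, so the inner sum of `a_n`
is the sum over `k` of the derivative of `x ↦ x c(x)⁴ c(n-x)⁴` at `x = k`. The derivative of
`c(x)⁴ c(n-x)⁴` alone is odd under `k ↦ n-k`, so up to the factor `-2` the weight `x` may be
replaced by the very-well-poised weight `n - 2x`.

For `t(n,x) = (n-2x) c(x)⁴ c(n-x)⁴` creative telescoping gives a certificate: a combination of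
`t(n,x)`, `t(n-1,x)`, `t(n-2,x)` with coefficients free of `x` equals `G(n,x+1) - G(n,x)`, where
`G(n,x) = x⁴ cert(n,x) c(x)⁴ c(n-x)⁴ / (2(n-x)-1)⁴` with the polynomial `cert` below.
Differentiating in `x` and summing over `k` gives the recurrence; the boundary terms vanish
because `x⁴` and `c(n-x)⁴` have fourth-order zeros at `x = 0` and `x = n+1` respectively.

Differentiation is carried out in the dual numbers `ℚ[ε]`: `c(k+ε)` is the element `cPlus` and
`c(m-ε)` the element `cMinus`, both satisfying the first-order recurrence of `c`. Hence the
telescoping is an identity in a commutative ring containing an `ε` with `ε⁴ = 0`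
(`sum_recurrence`), and the recurrence of the derivatives is its `ε`-component.
-/

open Finset

/-! ### The telescoping identity in a commutative ring -/

/-- The polynomial factor of the creative-telescoping certificate. -/
def cert {R : Type*} [CommRing R] (n x : R) : R :=
  (5 * n ^ 2 - 40 * n ^ 3 + 80 * n ^ 4 - 48 * n ^ 5)
    + (-6 * n + 88 * n ^ 2 - 224 * n ^ 3 + 160 * n ^ 4) * x
    + (2 - 64 * n + 216 * n ^ 2 - 192 * n ^ 3) * x ^ 2
    + (16 - 80 * n + 96 * n ^ 2) * x ^ 3 + (8 - 16 * n) * x ^ 4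

/-- The identity behind the telescoping, after division by the common factor of the summands;
here `x + y` plays the role of `n`. -/
lemma cert_identity {R : Type*} [CommRing R] (x y : R) :
    (x + y) ^ 5 * (y - x) * ((2 * y - 1) * (2 * y - 3)) ^ 4
      - 2 * (2 * (x + y) - 1) * (8 * (x + y - 1) ^ 4 + 16 * (x + y - 1) ^ 3
          + 20 * (x + y - 1) ^ 2 + 12 * (x + y - 1) + 3) * (y - x - 1) * (y * (2 * y - 3)) ^ 4
      + 256 * (x + y - 1) ^ 5 * (y - x - 2) * (y * (y - 1)) ^ 4
    = (2 * x + 1) ^ 4 * y ^ 4 * cert (x + y) (x + 1)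
      - x ^ 4 * (2 * y - 3) ^ 4 * cert (x + y) x := by
  unfold cert
  ring

/-- The very-well-poised sum `Σ_k (n - 2(k+ε)) C_k⁴ B_{n-k}⁴`. -/
def wpSum {R : Type*} [CommRing R] (ε : R) (C B : ℕ → R) (n : ℕ) : R :=
  ∑ k ∈ range (n + 1), ((n : R) - 2 * (k + ε)) * C k ^ 4 * B (n - k) ^ 4

/-- The recurrence for `wpSum`, valid for any sequences `C`, `B` obeying the recurrences of
`c(k+ε)` and `c(m-ε)`, as soon as `ε⁴ = 0`. -/
lemma sum_recurrence {R : Type*} [CommRing R] (ε : R) (hε : ε ^ 4 = 0)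
    (hu : ∀ z : ℤ, IsUnit (2 * ((z : R) - ε) - 1)) (C B : ℕ → R)
    (hC : ∀ k : ℕ, ((k : R) + ε + 1) * C (k + 1) = 2 * (2 * (k + ε) + 1) * C k)
    (hB : ∀ m : ℕ, ((m : R) + 1 - ε) * B (m + 1) = 2 * (2 * (m + 1 - ε) - 1) * B m) (N : ℕ) :
    ((N : R) + 2) ^ 5 * wpSum ε C B (N + 2)
      - 32 * (2 * ((N : R) + 2) - 1) * (8 * ((N : R) + 1) ^ 4 + 16 * ((N : R) + 1) ^ 3
          + 20 * ((N : R) + 1) ^ 2 + 12 * ((N : R) + 1) + 3) * wpSum ε C B (N + 1)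
      + 2 ^ 16 * ((N : R) + 1) ^ 5 * wpSum ε C B N = 0 := by
  have hu1 : ∀ m : ℕ, IsUnit (2 * ((m : R) - ε) - 1) := fun m => by
    simpa using hu m
  have hu3 : ∀ m : ℕ, IsUnit (2 * ((m : R) - ε) - 3) := fun m => by
    have h := hu ((m : ℤ) - 1)
    have e : 2 * ((m : R) - ε) - 3 = 2 * (((((m : ℤ) - 1) : ℤ) : R) - ε) - 1 := by
      push_cast; ring
    rw [e]; exact h
  -- With `c(m-ε)` for `B m`, `V m` is `c(m-ε) / ((2(m-ε)-1)(2(m-ε)-3))`, of which `c(m-ε-i)` is a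
  -- polynomial multiple for `i = 0, 1, 2`.
  have hV : ∀ m : ℕ, ∃ v : R, (2 * ((m : R) - ε) - 1) * (2 * ((m : R) - ε) - 3) * v = B m :=
    fun m => by
      obtain ⟨w, hw⟩ := (((hu1 m).mul (hu3 m)).dvd : _ ∣ B m)
      exact ⟨w, hw.symm⟩
  choose V hV using hV
  have hB1 : ∀ m : ℕ, 2 * B m
      = ((m : R) + 1 - ε) * (2 * ((m : R) + 1 - ε) - 3) * V (m + 1) := fun m => by
    apply (hu1 (m + 1)).mul_left_cancel
    have h1 := hV (m + 1)
    have h2 := hB m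
    push_cast at h1 ⊢
    linear_combination (-1 : R) * h2 - ((m : R) + 1 - ε) * h1
  have hB2 : ∀ m : ℕ, 4 * B m
      = ((m : R) + 2 - ε) * ((m : R) + 1 - ε) * V (m + 2) := fun m => by
    apply (hu3 (m + 2)).mul_left_cancel
    have h1 := hB1 (m + 1)
    have h2 := hB m
    push_cast at h1 ⊢
    linear_combination (-2 : R) * h2 + ((m : R) + 1 - ε) * h1
  have hV1 : ∀ m : ℕ, 2 * (2 * ((m : R) - ε) - 3) * V m = ((m : R) + 1 - ε) * V (m + 1) :=
    fun m => by
      apply (hu1 m).mul_left_cancel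
      have h1 := hB1 m
      have h2 := hV m
      linear_combination h1 + 2 * h2
  -- All three sums extend to the same range, the additional terms being multiples of `ε⁴`.
  have e0 : wpSum ε C B (N + 2) = ∑ k ∈ range (N + 2 + 1),
      ((N : R) + 2 - 2 * (k + ε)) * C k ^ 4 *
        ((2 * (((N + 2 - k : ℕ) : R) - ε) - 1) * (2 * (((N + 2 - k : ℕ) : R) - ε) - 3)
          * V (N + 2 - k)) ^ 4 := by
    unfold wpSum
    refine sum_congr rfl fun k _ => ?_
    rw [hV]; push_cast; ring
  have e1 : 16 * wpSum ε C B (N + 1) = ∑ k ∈ range (N + 2 + 1),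
      ((N : R) + 1 - 2 * (k + ε)) * C k ^ 4 *
        ((((N + 2 - k : ℕ) : R) - ε) * (2 * (((N + 2 - k : ℕ) : R) - ε) - 3)
          * V (N + 2 - k)) ^ 4 := by
    unfold wpSum
    rw [sum_range_succ _ (N + 2), mul_sum]
    have hz : ∀ a b v : R, a * ((((N + 2 - (N + 2) : ℕ) : R) - ε) * b * v) ^ 4 = 0 := by
      intro a b v
      simp only [Nat.sub_self, Nat.cast_zero]
      linear_combination a * b ^ 4 * v ^ 4 * hε
    rw [hz, add_zero]
    refine sum_congr rfl fun k hk => ?_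
    obtain ⟨m, hm⟩ := Nat.exists_eq_add_of_le (Nat.lt_succ_iff.mp (mem_range.mp hk))
    have h1 : N + 1 - k = m := by omega
    have h2 : N + 2 - k = m + 1 := by omega
    have := hB1 m
    rw [h1, h2]
    push_cast
    rw [← this]
    ring
  have e2 : 256 * wpSum ε C B N = ∑ k ∈ range (N + 2 + 1),
      ((N : R) - 2 * (k + ε)) * C k ^ 4 *
        ((((N + 2 - k : ℕ) : R) - ε) * (((N + 2 - k : ℕ) : R) - ε - 1)
          * V (N + 2 - k)) ^ 4 := by
    unfold wpSum
    rw [sum_range_succ _ (N + 2), sum_range_succ _ (N + 1), mul_sum]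
    have hz : ∀ a b v : R, a * ((((N + 2 - (N + 2) : ℕ) : R) - ε) * b * v) ^ 4 = 0 := by
      intro a b v
      simp only [Nat.sub_self, Nat.cast_zero]
      linear_combination a * b ^ 4 * v ^ 4 * hε
    have hz' : ∀ a b v : R, a * (b * (((N + 2 - (N + 1) : ℕ) : R) - ε - 1) * v) ^ 4 = 0 := by
      intro a b v
      have : N + 2 - (N + 1) = 1 := by omega
      rw [this, Nat.cast_one]
      linear_combination a * b ^ 4 * v ^ 4 * hε
    rw [hz, hz', add_zero, add_zero]
    refine sum_congr rfl fun k hk => ?_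
    obtain ⟨m, hm⟩ := Nat.exists_eq_add_of_le (Nat.lt_succ_iff.mp (mem_range.mp hk))
    have h1 : N - k = m := by omega
    have h2 : N + 2 - k = m + 2 := by omega
    have := hB2 m
    rw [h1, h2]
    push_cast
    rw [show (m : R) + 2 - ε - 1 = m + 1 - ε by ring, ← this]
    ring
  -- The two sides of the telescoping difference.
  let X : ℕ → R := fun k => (2 * ((k : R) + ε) + 1) ^ 4 * (((N + 2 - k : ℕ) : R) - ε) ^ 4
    * cert ((N : R) + 2) ((k : R) + ε + 1) * C k ^ 4 * V (N + 2 - k) ^ 4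
  let Y : ℕ → R := fun k => ((k : R) + ε) ^ 4 * (2 * (((N + 2 - k : ℕ) : R) - ε) - 3) ^ 4
    * cert ((N : R) + 2) ((k : R) + ε) * C k ^ 4 * V (N + 2 - k) ^ 4
  have hXY : ∀ k ∈ range (N + 2), X k = Y (k + 1) := by
    intro k hk
    obtain ⟨m, hm⟩ := Nat.exists_eq_add_of_le (Nat.lt_succ_iff.mp (mem_range.mp hk))
    have h1 : N + 2 - (k + 1) = m := by omega
    have h2 : N + 2 - k = m + 1 := by omega
    have h3 := hC k
    have h4 := hV1 m
    simp only [X, Y, h1, h2]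
    push_cast
    -- The factors `2` of the two recurrences cancel, so regroup before substituting.
    have h5 : ((k : R) + ε + 1) * C (k + 1) * ((2 * ((m : R) - ε) - 3) * V m)
        = (2 * (k + ε) + 1) * C k * (((m : R) + 1 - ε) * V (m + 1)) := by
      rw [h3, ← h4]; ring
    rw [show (k : R) + 1 + ε = k + ε + 1 by ring]
    calc _ = cert ((N : R) + 2) ((k : R) + ε + 1)
          * ((2 * (k + ε) + 1) * C k * (((m : R) + 1 - ε) * V (m + 1))) ^ 4 := by ring
      _ = _ := by rw [← h5]; ring
  have hXn : X (N + 2) = 0 := by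
    simp only [X, Nat.sub_self, Nat.cast_zero]
    linear_combination (2 * (((N + 2 : ℕ) : R) + ε) + 1) ^ 4
      * cert ((N : R) + 2) (((N + 2 : ℕ) : R) + ε + 1) * C (N + 2) ^ 4 * V 0 ^ 4 * hε
  have hY0 : Y 0 = 0 := by
    simp only [Y, Nat.cast_zero, zero_add, hε, zero_mul]
  have htel : ∑ k ∈ range (N + 2 + 1), (X k - Y k) = 0 := by
    rw [sum_sub_distrib, sum_range_succ X, sum_range_succ' Y, hXn, hY0, sum_congr rfl hXY, sub_self]
  calc _ = ((N : R) + 2) ^ 5 * wpSum ε C B (N + 2)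
      - 2 * (2 * ((N : R) + 2) - 1) * (8 * ((N : R) + 1) ^ 4 + 16 * ((N : R) + 1) ^ 3
          + 20 * ((N : R) + 1) ^ 2 + 12 * ((N : R) + 1) + 3) * (16 * wpSum ε C B (N + 1))
      + 256 * ((N : R) + 1) ^ 5 * (256 * wpSum ε C B N) := by ring
    _ = ∑ k ∈ range (N + 2 + 1), (X k - Y k) := by
      rw [e0, e1, e2, mul_sum, mul_sum, mul_sum, ← sum_sub_distrib, ← sum_add_distrib]
      refine sum_congr rfl fun k hk => ?_
      obtain ⟨m, hm⟩ := Nat.exists_eq_add_of_le (Nat.lt_succ_iff.mp (mem_range.mp hk))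
      have h1 : N + 2 - k = m := by omega
      have hn : (N : R) + 2 = ((k : R) + ε) + ((m : R) - ε) := by
        have : ((N + 2 : ℕ) : R) = ((k + m : ℕ) : R) := by rw [hm]
        push_cast at this
        rw [this]; ring
      have hid := cert_identity ((k : R) + ε) ((m : R) - ε)
      have hN : (N : R) = ((k : R) + ε) + ((m : R) - ε) - 2 := by rw [← hn]; ring
      simp only [X, Y, h1]
      rw [hN]
      generalize (k : R) + ε = x at *
      generalize (m : R) - ε = y at *
      rw [show x + y - 2 + 2 = x + y by ring, show x + y - 2 + 1 = x + y - 1 by ring]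
      linear_combination C k ^ 4 * V m ^ 4 * hid
    _ = 0 := htel

/-! ### Central binomial coefficients in the dual numbers -/

/-- The difference `H_{2k} - H_k`, half the logarithmic derivative of `c` at `k`. -/
def harmDiff (H : ℕ → ℚ) (k : ℕ) : ℚ := H (2 * k) - H k

/-- The value `c(k+ε)` in the dual numbers. -/
def cPlus (H : ℕ → ℚ) (k : ℕ) : DualNumber ℚ :=
  TrivSqZeroExt.inl (k.centralBinom : ℚ) + TrivSqZeroExt.inr (2 * k.centralBinom * harmDiff H k)

/-- The value `c(m-ε)` in the dual numbers. -/
def cMinus (H : ℕ → ℚ) (m : ℕ) : DualNumber ℚ :=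
  TrivSqZeroExt.inl (m.centralBinom : ℚ) + TrivSqZeroExt.inr (-(2 * m.centralBinom * harmDiff H m))

lemma harmDiff_succ (H : ℕ → ℚ) (hH : ∀ n, H n = ∑ i ∈ range n, (1 : ℚ) / (i + 1)) (k : ℕ) :
    2 * ((k : ℚ) + 1) * (2 * k + 1) * harmDiff H (k + 1)
      = 2 * ((k : ℚ) + 1) * (2 * k + 1) * harmDiff H k + 1 := by
  have h : ∀ n, H (n + 1) = H n + 1 / ((n : ℚ) + 1) := fun n => by
    rw [hH, hH, sum_range_succ]
  unfold harmDiff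
  rw [show 2 * (k + 1) = 2 * k + 1 + 1 by ring, h, h, h]
  have h1 : (k : ℚ) + 1 ≠ 0 := by positivity
  have h2 : 2 * (k : ℚ) + 1 ≠ 0 := by positivity
  have h3 : 2 * (k : ℚ) + 1 + 1 ≠ 0 := by positivity
  push_cast
  field_simp
  ring

lemma centralBinom_succ_cast (k : ℕ) :
    ((k : ℚ) + 1) * ((k + 1).centralBinom : ℚ) = 2 * (2 * k + 1) * k.centralBinom := by
  exact_mod_cast Nat.succ_mul_centralBinom_succ k

lemma fst_two : TrivSqZeroExt.fst (2 : DualNumber ℚ) = 2 := rfl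

lemma snd_two : TrivSqZeroExt.snd (2 : DualNumber ℚ) = 0 :=
  TrivSqZeroExt.snd_natCast 2

lemma cPlus_succ (H : ℕ → ℚ) (hH : ∀ n, H n = ∑ i ∈ range n, (1 : ℚ) / (i + 1)) (k : ℕ) :
    ((k : DualNumber ℚ) + DualNumber.eps + 1) * cPlus H (k + 1)
      = 2 * (2 * ((k : DualNumber ℚ) + DualNumber.eps) + 1) * cPlus H k := by
  have h1 := centralBinom_succ_cast k
  have h2 := harmDiff_succ H hH k
  have h0 : (k : ℚ) + 1 ≠ 0 := by positivity
  ext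
  · simp [cPlus, fst_two]
    linear_combination h1
  · simp [cPlus, fst_two, snd_two]
    apply mul_left_cancel₀ h0
    linear_combination ((2 * harmDiff H (k + 1) * (k + 1) + 1) * h1 + 2 * (k.centralBinom : ℚ) * h2)

lemma cMinus_succ (H : ℕ → ℚ) (hH : ∀ n, H n = ∑ i ∈ range n, (1 : ℚ) / (i + 1)) (m : ℕ) :
    ((m : DualNumber ℚ) + 1 - DualNumber.eps) * cMinus H (m + 1)
      = 2 * (2 * ((m : DualNumber ℚ) + 1 - DualNumber.eps) - 1) * cMinus H m := by
  have h1 := centralBinom_succ_cast m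
  have h2 := harmDiff_succ H hH m
  have h0 : (m : ℚ) + 1 ≠ 0 := by positivity
  ext
  · simp [cMinus, fst_two]
    linear_combination h1
  · simp [cMinus, fst_two, snd_two]
    apply mul_left_cancel₀ h0
    linear_combination (-1 : ℚ) * ((2 * harmDiff H (m + 1) * (m + 1) + 1) * h1 + 2 * (m.centralBinom : ℚ) * h2)

lemma cPlus_pow (H : ℕ → ℚ) (k : ℕ) : cPlus H k ^ 4 =
    TrivSqZeroExt.inl ((k.centralBinom : ℚ) ^ 4)
      + TrivSqZeroExt.inr (8 * (k.centralBinom : ℚ) ^ 4 * harmDiff H k) := by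
  ext <;> (simp [cPlus]; try ring)

lemma cMinus_pow (H : ℕ → ℚ) (m : ℕ) : cMinus H m ^ 4 =
    TrivSqZeroExt.inl ((m.centralBinom : ℚ) ^ 4)
      + TrivSqZeroExt.inr (-(8 * (m.centralBinom : ℚ) ^ 4 * harmDiff H m)) := by
  ext <;> (simp [cMinus]; try ring)

/-- The `ε`-component of `wpSum` is `-2` times the inner sum of `a_n`: the part of the weight
that is independent of `k` contributes nothing, by antisymmetry under `k ↦ n - k`. -/
lemma snd_wpSum (H : ℕ → ℚ) (n : ℕ) :
    (wpSum (DualNumber.eps : DualNumber ℚ) (cPlus H) (cMinus H) n).snd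
      = -2 * ∑ k ∈ range (n + 1), (k.centralBinom : ℚ) ^ 4 * ((n - k).centralBinom : ℚ) ^ 4
          * (1 + 8 * (k : ℚ) * (harmDiff H k - harmDiff H (n - k))) := by
  have hodd : ∑ k ∈ range (n + 1), (k.centralBinom : ℚ) ^ 4 * ((n - k).centralBinom : ℚ) ^ 4
      * (harmDiff H k - harmDiff H (n - k)) = 0 := by
    have h := sum_range_reflect (fun k => (k.centralBinom : ℚ) ^ 4
      * ((n - k).centralBinom : ℚ) ^ 4 * (harmDiff H k - harmDiff H (n - k))) (n + 1)
    have h' : ∑ j ∈ range (n + 1), (fun k => (k.centralBinom : ℚ) ^ 4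
        * ((n - k).centralBinom : ℚ) ^ 4 * (harmDiff H k - harmDiff H (n - k))) (n + 1 - 1 - j)
        = -∑ k ∈ range (n + 1), (k.centralBinom : ℚ) ^ 4 * ((n - k).centralBinom : ℚ) ^ 4
          * (harmDiff H k - harmDiff H (n - k)) := by
      rw [← sum_neg_distrib]
      refine sum_congr rfl fun k hk => ?_
      have hk' : k ≤ n := Nat.lt_succ_iff.mp (mem_range.mp hk)
      simp only [Nat.add_sub_cancel, Nat.sub_sub_self hk']
      ring
    linarith
  have key : (wpSum (DualNumber.eps : DualNumber ℚ) (cPlus H) (cMinus H) n).snd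
      = -2 * ∑ k ∈ range (n + 1), (k.centralBinom : ℚ) ^ 4 * ((n - k).centralBinom : ℚ) ^ 4
          * (1 + 8 * (k : ℚ) * (harmDiff H k - harmDiff H (n - k)))
        + 8 * n * ∑ k ∈ range (n + 1), (k.centralBinom : ℚ) ^ 4 * ((n - k).centralBinom : ℚ) ^ 4
          * (harmDiff H k - harmDiff H (n - k)) := by
    unfold wpSum
    rw [TrivSqZeroExt.snd_sum, mul_sum, mul_sum, ← sum_add_distrib]
    refine sum_congr rfl fun k _ => ?_
    rw [cPlus_pow, cMinus_pow]
    simp [fst_two, snd_two]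
    ring
  rw [key, hodd, mul_zero, add_zero]

/-- The recurrence of the inner sums of `a_n`. -/
lemma inner_recurrence (H : ℕ → ℚ) (hH : ∀ n, H n = ∑ i ∈ range n, (1 : ℚ) / (i + 1))
    (S : ℕ → ℚ)
    (hS : ∀ n, S n = ∑ k ∈ range (n + 1), (k.centralBinom : ℚ) ^ 4
      * ((n - k).centralBinom : ℚ) ^ 4
      * (1 + 8 * (k : ℚ) * (harmDiff H k - harmDiff H (n - k)))) (N : ℕ) :
    ((N : ℚ) + 2) ^ 5 * S (N + 2)
      - 32 * (2 * ((N : ℚ) + 2) - 1) * (8 * ((N : ℚ) + 1) ^ 4 + 16 * ((N : ℚ) + 1) ^ 3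
          + 20 * ((N : ℚ) + 1) ^ 2 + 12 * ((N : ℚ) + 1) + 3) * S (N + 1)
      + 2 ^ 16 * ((N : ℚ) + 1) ^ 5 * S N = 0 := by
  have hW : ∀ n, (wpSum (DualNumber.eps : DualNumber ℚ) (cPlus H) (cMinus H) n).snd
      = -2 * S n := fun n => by rw [snd_wpSum, hS]
  have hε : (DualNumber.eps : DualNumber ℚ) ^ 4 = 0 := by
    rw [show 4 = 2 + 2 from rfl, pow_add, sq, DualNumber.eps_mul_eps, zero_mul]
  have hu : ∀ z : ℤ, IsUnit (2 * ((z : DualNumber ℚ) - DualNumber.eps) - 1) := fun z => by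
    rw [TrivSqZeroExt.isUnit_iff_isUnit_fst, isUnit_iff_ne_zero]
    simp [fst_two]
    intro h
    -- `2z = 1` has no integer solution.
    have h' : 2 * z = 1 := by
      have : (2 : ℚ) * z = 1 := by linarith
      exact_mod_cast this
    omega
  have h := sum_recurrence DualNumber.eps hε hu (cPlus H) (cMinus H) (cPlus_succ H hH)
    (cMinus_succ H hH) N
  -- The coefficients are rational, so they act on the `ε`-component by multiplication.
  have hlin : ∀ (p q r : ℚ) (x y z : DualNumber ℚ),
      (TrivSqZeroExt.inl p * x - TrivSqZeroExt.inl q * y + TrivSqZeroExt.inl r * z).snd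
        = p * x.snd - q * y.snd + r * z.snd := by
    intro p q r x y z
    simp
  have h' := hlin (((N : ℚ) + 2) ^ 5)
    (32 * (2 * ((N : ℚ) + 2) - 1) * (8 * ((N : ℚ) + 1) ^ 4 + 16 * ((N : ℚ) + 1) ^ 3
          + 20 * ((N : ℚ) + 1) ^ 2 + 12 * ((N : ℚ) + 1) + 3))
    (2 ^ 16 * ((N : ℚ) + 1) ^ 5)
    (wpSum DualNumber.eps (cPlus H) (cMinus H) (N + 2))
    (wpSum DualNumber.eps (cPlus H) (cMinus H) (N + 1))
    (wpSum DualNumber.eps (cPlus H) (cMinus H) N)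
  have hmap : ∀ p : ℚ, (TrivSqZeroExt.inl p : DualNumber ℚ) = TrivSqZeroExt.inlHom ℚ ℚ p :=
    fun _ => rfl
  simp only [hmap, map_add, map_sub, map_mul, map_pow, map_natCast, map_ofNat, map_one] at h'
  rw [h, TrivSqZeroExt.snd_zero, hW, hW, hW] at h'
  linarith

/-- Case A: the sequence
`a_n = C(2n,n)² Σ_{k=0}^n C(2k,k)⁴ C(2n−2k,n−k)⁴ (1 + 8k(H_{2k} − H_k − H_{2n−2k} + H_{n−k}))`
satisfies, for all `n ≥ 1` (with the convention `a_{−1} = 0`, which is encoded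
here by the vanishing of the factor `(n−1)³` at `n = 1`):
`n⁷ a_n = 128(2n−1)³(8(n−1)⁴+16(n−1)³+20(n−1)²+12(n−1)+3) a_{n−1}
          − 2²⁰ (n−1)³ (2n−3)² (2n−1)² a_{n−2}`;
i.e. `y₀ = Σ a_n zⁿ` is annihilated by
`θ⁷ − 128z(2θ+1)³(8θ⁴+16θ³+20θ²+12θ+3) + 2²⁰z²(θ+1)³(2θ+1)²(2θ+3)²`. -/
theorem stmt15 (H : ℕ → ℚ) (hH : ∀ n, H n = ∑ i ∈ range n, (1 : ℚ) / (i + 1))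
    (a : ℕ → ℚ)
    (ha : ∀ n, a n = (Nat.choose (2 * n) n : ℚ) ^ 2 *
        ∑ k ∈ range (n + 1),
          (Nat.choose (2 * k) k : ℚ) ^ 4
            * (Nat.choose (2 * n - 2 * k) (n - k) : ℚ) ^ 4
            * (1 + 8 * (k : ℚ)
                * (H (2 * k) - H k - H (2 * n - 2 * k) + H (n - k)))) :
    ∀ n : ℕ, 1 ≤ n →
      (n : ℚ) ^ 7 * a n
        = 128 * (2 * (n : ℚ) - 1) ^ 3
            * (8 * ((n : ℚ) - 1) ^ 4 + 16 * ((n : ℚ) - 1) ^ 3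
                + 20 * ((n : ℚ) - 1) ^ 2 + 12 * ((n : ℚ) - 1) + 3) * a (n - 1)
          - 2 ^ 20 * ((n : ℚ) - 1) ^ 3 * (2 * (n : ℚ) - 3) ^ 2
            * (2 * (n : ℚ) - 1) ^ 2 * a (n - 2) := by
  have hcb : ∀ k, (Nat.choose (2 * k) k : ℚ) = (k.centralBinom : ℚ) := fun k => by
    rw [Nat.centralBinom_eq_two_mul_choose]
  let S : ℕ → ℚ := fun n => ∑ k ∈ range (n + 1), (k.centralBinom : ℚ) ^ 4
    * ((n - k).centralBinom : ℚ) ^ 4 * (1 + 8 * (k : ℚ) * (harmDiff H k - harmDiff H (n - k)))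
  have haS : ∀ n, a n = (n.centralBinom : ℚ) ^ 2 * S n := by
    intro n
    rw [ha, hcb]
    congr 1
    refine sum_congr rfl fun k _ => ?_
    rw [← Nat.mul_sub, hcb, hcb]
    unfold harmDiff
    ring
  intro n hn
  obtain rfl | ⟨N, rfl⟩ : n = 1 ∨ ∃ N, n = N + 2 := by
    rcases n with _ | _ | N
    · omega
    · exact Or.inl rfl
    · exact Or.inr ⟨N, rfl⟩
  · rw [ha, ha]
    simp [sum_range_succ, hH]
    norm_num
  · have hrec := inner_recurrence H hH S (fun _ => rfl) N
    have c1 := centralBinom_succ_cast N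
    have c2 := centralBinom_succ_cast (N + 1)
    rw [show N + 2 - 1 = N + 1 by omega, show N + 2 - 2 = N by omega, haS, haS, haS]
    rw [show N + 1 + 1 = N + 2 from rfl] at c2
    push_cast at c2 ⊢
    have d2 : ((N : ℚ) + 2) ^ 2 * ((N + 2).centralBinom : ℚ) ^ 2
        = 4 * (2 * N + 3) ^ 2 * ((N + 1).centralBinom : ℚ) ^ 2 := by
      have : ((N : ℚ) + 2) * ((N + 2).centralBinom : ℚ)
        = 2 * (2 * N + 3) * ((N + 1).centralBinom : ℚ) := by linear_combination c2
      rw [← mul_pow, this]; ring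
    have d1 : ((N : ℚ) + 1) ^ 2 * ((N + 1).centralBinom : ℚ) ^ 2
        = 4 * (2 * N + 1) ^ 2 * (N.centralBinom : ℚ) ^ 2 := by
      rw [← mul_pow, c1]; ring
    linear_combination ((N : ℚ) + 2) ^ 5 * S (N + 2) * d2
      + 4 * (2 * (N : ℚ) + 3) ^ 2 * ((N + 1).centralBinom : ℚ) ^ 2 * hrec
      - 2 ^ 18 * ((N : ℚ) + 1) ^ 3 * (2 * (N : ℚ) + 3) ^ 2 * S N * d1
end

section
/- Define the sequence a_n ∈ ℚ by a_n = C(2n,n)C(3n,n) · Σ_{k=0}^{n} C(2k,k)² C(3k,k)² C(2n−2k, n−k)² C(3n−3k, n−k)² · (1 + 6k(H_{3k} − H_k − H_{3n−3k} + H_{n−k})). Then, with the convention a_{−1} = 0, for every n ≥ 1: n^7 a_n = 27(2n−1)(3n−2)(3n−1)(81(n−1)^4 + 162(n−1)^3 + 198(n−1)^2 + 117(n−1) + 28) a_{n−1} − 3^{12} (n−1)(3n−5)(3n−4)^2(3n−2)^2(3n−1) a_{n−2}. Equivalently, the power series y_0 = Σ_{n≥0} a_n z^n is annihilated by the seventh-order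 operator θ^7 − 27z(2θ+1)(3θ+1)(3θ+2)(81θ^4+162θ^3+198θ^2+117θ+28) + 3^{12} z^2 (θ+1)(3θ+1)(3θ+2)^2(3θ+4)^2(3θ+5), where θ = z d/dz. -/
/-!
Write `B k = C(2k,k) C(3k,k) = (3k)!/k!³` and `G k = 6 (H_{3k} - H_k)`, the logarithmic derivative
of `B²` at `k`. The summand of `a_n / B n` is then formally `∂/∂k [k T(n,k)]` with
`T(n,k) = B(k)² B(n-k)²`. As `T` is symmetric under `k ↦ n - k`, the sum of `∂T/∂k` over
`0 ≤ k ≤ n` vanishes, so the weight `k` may be replaced by `k - n/2`: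
`2 a_n = B n * ∑_k ∂/∂k [(2k - n) T(n,k)]` (`sum_weight`).

The term `(2k - n) T(n,k)` is very well-poised, and creative telescoping gives
`n⁵ (2k-n) T(n,k) - 9(2n-1) q(n) (2k-n+1) T(n-1,k) + 3¹⁰ (n-1)³(3n-4)(3n-2) (2k-n+2) T(n-2,k)
  = U(n,k+1) - U(n,k)` for `U(n,k) = k⁴ p(n,k) / ((3(n-k)-1)² (3(n-k)-2)²) * T(n,k)`,
where `q(n) = 81(n-1)⁴ + 162(n-1)³ + 198(n-1)² + 117(n-1) + 28` and `p` is a polynomial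
(`certPoly`). Differentiating in `k` yields a telescoping identity for the
terms with harmonic numbers (`term_telescope`); it is checked directly from the first-order
recurrences of `B²` and `G`. Summation over `k` (`sum_recurrence`), together with
`(n+1)² B(n+1) = 3(3n+1)(3n+2) B(n)`, gives the recurrence for `a`.
-/

open Finset

namespace CaseB

/-- `H_n`, the `n`-th harmonic number. -/
def harm (n : ℕ) : ℚ := ∑ i ∈ range n, (1 : ℚ) / (i + 1)

/-- `B n = C(2n,n) C(3n,n)`. -/
def B (n : ℕ) : ℚ := (Nat.choose (2 * n) n : ℚ) * (Nat.choose (3 * n) n : ℚ)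

/-- The logarithmic derivative `6 (H_{3n} - H_n)` of `B²` at `n`. -/
def G (n : ℕ) : ℚ := 6 * (harm (3 * n) - harm n)

/-- The derivative `∂/∂k [(2k - n) B(k)² B(n-k)²]`, in the variables `k` and `m = n - k`. -/
def term (k m : ℕ) : ℚ :=
  B k ^ 2 * B m ^ 2 * (2 + ((k : ℚ) - m) * (G k - G m))

/-- The polynomial factor `p(n,k)` of the telescoping certificate. -/
def certPoly (n k : ℚ) : ℚ :=
  n ^ 2 * (243 * n ^ 3 - 387 * n ^ 2 + 180 * n - 20)
    + n * (-810 * n ^ 3 + 1080 * n ^ 2 - 396 * n + 24) * k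
    + (972 * n ^ 3 - 1035 * n ^ 2 + 288 * n - 8) * k ^ 2
    + (-486 * n ^ 2 + 378 * n - 72) * k ^ 3 + (81 * n - 36) * k ^ 4

/-- The partial derivative `∂p/∂k` of `certPoly`. -/
def certPoly' (n k : ℚ) : ℚ :=
  n * (-810 * n ^ 3 + 1080 * n ^ 2 - 396 * n + 24)
    + 2 * (972 * n ^ 3 - 1035 * n ^ 2 + 288 * n - 8) * k
    + 3 * (-486 * n ^ 2 + 378 * n - 72) * k ^ 2 + 4 * (81 * n - 36) * k ^ 3

/-- The derivative `∂U/∂k` of the certificate `U(n,k) = k⁴ p(n,k) / e(m)² * B(k)² B(m)²`, where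
`m = n - k` and `e(m) = (3m-1)(3m-2)`. The last rational summand comes from `1 / e(n-k)²`, with
`e'(m) = 18m - 9`. -/
def cert (k m : ℕ) : ℚ :=
  B k ^ 2 * B m ^ 2 *
    ((4 * (k : ℚ) ^ 3 * certPoly (k + m) k + (k : ℚ) ^ 4 * certPoly' (k + m) k)
        / ((3 * (m : ℚ) - 1) * (3 * m - 2)) ^ 2
      + 2 * (18 * (m : ℚ) - 9) * (k : ℚ) ^ 4 * certPoly (k + m) k
        / ((3 * (m : ℚ) - 1) * (3 * m - 2)) ^ 3
      + (k : ℚ) ^ 4 * certPoly (k + m) k / ((3 * (m : ℚ) - 1) * (3 * m - 2)) ^ 2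
        * (G k - G m))

/-- The coefficient of `a_{n-1} / B (n-1)` in the recurrence for `a_n / B n`, whose leading
coefficient is `n⁵`. -/
def c₁ (n : ℚ) : ℚ :=
  -9 * (2 * n - 1) * (81 * (n - 1) ^ 4 + 162 * (n - 1) ^ 3 + 198 * (n - 1) ^ 2
    + 117 * (n - 1) + 28)

/-- The coefficient of `a_{n-2} / B (n-2)` in the recurrence for `a_n / B n`. -/
def c₂ (n : ℚ) : ℚ := 3 ^ 10 * (n - 1) ^ 3 * (3 * n - 4) * (3 * n - 2)

lemma B_eq_factorial (n : ℕ) : B n = ((3 * n).factorial : ℚ) / (n.factorial : ℚ) ^ 3 := by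
  unfold B
  rw [Nat.cast_choose ℚ (show n ≤ 2 * n by omega), Nat.cast_choose ℚ (show n ≤ 3 * n by omega),
    show 2 * n - n = n by omega, show 3 * n - n = 2 * n by omega]
  have h1 : (n.factorial : ℚ) ≠ 0 := by positivity
  have h2 : ((2 * n).factorial : ℚ) ≠ 0 := by positivity
  field_simp

lemma B_succ (n : ℕ) :
    B (n + 1) = 3 * (3 * n + 1) * (3 * n + 2) / ((n : ℚ) + 1) ^ 2 * B n := by
  rw [B_eq_factorial, B_eq_factorial, show 3 * (n + 1) = 3 * n + 1 + 1 + 1 by ring]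
  simp only [Nat.factorial_succ]
  push_cast
  have h1 : (n.factorial : ℚ) ≠ 0 := by positivity
  have h3 : (n : ℚ) + 1 ≠ 0 := by positivity
  field_simp
  ring

lemma G_succ (n : ℕ) :
    G (n + 1) = G n + 6 / (3 * (n : ℚ) + 1) + 6 / (3 * (n : ℚ) + 2) - 4 / ((n : ℚ) + 1) := by
  unfold G harm
  rw [show 3 * (n + 1) = 3 * n + 1 + 1 + 1 by ring]
  simp only [sum_range_succ]
  push_cast
  have h1 : 3 * (n : ℚ) + 1 ≠ 0 := by positivity
  have h2 : 3 * (n : ℚ) + 2 ≠ 0 := by positivity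
  have h3 : (n : ℚ) + 1 ≠ 0 := by positivity
  have h4 : 3 * (n : ℚ) + 1 + 1 + 1 ≠ 0 := by positivity
  have h5 : 3 * (n : ℚ) + 1 + 1 ≠ 0 := by positivity
  field_simp
  ring

lemma B_zero : B 0 = 1 := by simp [B]

lemma G_zero : G 0 = 0 := by simp [G]

lemma B_one : B 1 = 6 := by
  rw [B_succ, B_zero]; norm_num

lemma G_one : G 1 = 5 := by
  rw [G_succ, G_zero]; norm_num

/-- The creative telescoping identity for the differentiated terms, with `n = k + j + 2`. -/
lemma term_telescope (k j : ℕ) :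
    ((k : ℚ) + j + 2) ^ 5 * term k (j + 2) + c₁ (k + j + 2) * term k (j + 1)
      + c₂ (k + j + 2) * term k j = cert (k + 1) (j + 1) - cert k (j + 2) := by
  unfold term cert
  rw [G_succ k, G_succ (j + 1), G_succ j, B_succ k, B_succ (j + 1), B_succ j]
  unfold c₁ c₂ certPoly certPoly'
  push_cast
  generalize B k = b
  generalize B j = c
  generalize G k = x
  generalize G j = y
  have h1 : 3 * (k : ℚ) + 1 ≠ 0 := by positivity
  have h2 : 3 * (k : ℚ) + 2 ≠ 0 := by positivity
  have h3 : (k : ℚ) + 1 ≠ 0 := by positivity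
  have h4 : 3 * (j : ℚ) + 1 ≠ 0 := by positivity
  have h5 : 3 * (j : ℚ) + 2 ≠ 0 := by positivity
  have h6 : (j : ℚ) + 1 ≠ 0 := by positivity
  have h7 : (j : ℚ) + 2 ≠ 0 := by positivity
  have h8 : 3 * (j : ℚ) + 4 ≠ 0 := by positivity
  have h9 : 3 * (j : ℚ) + 5 ≠ 0 := by positivity
  -- Equal linear factors get one common form, so that clearing denominators produces no duplicates.
  rw [show 3 * ((j : ℚ) + 1) - 1 = 3 * j + 2 by ring, show 3 * ((j : ℚ) + 1) - 2 = 3 * j + 1 by ring,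
    show 3 * ((j : ℚ) + 2) - 1 = 3 * j + 5 by ring, show 3 * ((j : ℚ) + 2) - 2 = 3 * j + 4 by ring,
    show 3 * ((j : ℚ) + 1) + 1 = 3 * j + 4 by ring, show 3 * ((j : ℚ) + 1) + 2 = 3 * j + 5 by ring,
    show (j : ℚ) + 1 + 1 = j + 2 by ring]
  field_simp
  ring

/-- The telescoping identity at the upper end `k = n - 1, n` of the summation, `n = N + 2`, where
`T(n-2,k)` and then also `T(n-1,k)` vanish. -/
lemma term_boundary (N : ℕ) :
    cert (N + 1) 1 + ((N : ℚ) + 2) ^ 5 * (term (N + 1) 1 + term (N + 2) 0)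
      + c₁ (N + 2) * term (N + 1) 0 = 0 := by
  unfold term cert
  rw [G_succ (N + 1), B_succ (N + 1), B_zero, G_zero, B_one, G_one]
  unfold c₁ certPoly certPoly'
  push_cast
  have h1 : 3 * ((N : ℚ) + 1) + 1 ≠ 0 := by positivity
  have h2 : 3 * ((N : ℚ) + 1) + 2 ≠ 0 := by positivity
  have h3 : (N : ℚ) + 1 + 1 ≠ 0 := by positivity
  field_simp
  ring

/-- The sum `∑_k ∂/∂k [(2k - n) T(n,k)]`, which equals `2 a_n / B n`. -/
def S (n : ℕ) : ℚ := ∑ k ∈ range (n + 1), term k (n - k)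

lemma cert_zero (m : ℕ) : cert 0 m = 0 := by simp [cert]

lemma sum_telescope (N i : ℕ) (hi : i ≤ N + 1) :
    ∑ k ∈ range i, (((N : ℚ) + 2) ^ 5 * term k (N + 2 - k) + c₁ (N + 2) * term k (N + 1 - k)
      + c₂ (N + 2) * term k (N - k)) = cert i (N + 2 - i) := by
  induction i with
  | zero => simp [cert_zero]
  | succ i ih =>
    rw [sum_range_succ, ih (by omega)]
    obtain ⟨j, rfl⟩ : ∃ j, N = i + j := ⟨N - i, by omega⟩
    have h := term_telescope i j
    rw [show i + j + 2 - i = j + 2 by omega, show i + j + 1 - i = j + 1 by omega,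
      show i + j - i = j by omega, show i + j + 2 - (i + 1) = j + 1 by omega]
    push_cast
    linear_combination h

lemma sum_recurrence (N : ℕ) :
    ((N : ℚ) + 2) ^ 5 * S (N + 2) + c₁ (N + 2) * S (N + 1) + c₂ (N + 2) * S N = 0 := by
  have h := sum_telescope N (N + 1) le_rfl
  have hb := term_boundary N
  simp only [sum_add_distrib, ← mul_sum] at h
  rw [show N + 2 - (N + 1) = 1 by omega] at h
  unfold S
  rw [sum_range_succ _ (N + 2), sum_range_succ _ (N + 1), sum_range_succ _ (N + 1),
    show N + 2 - (N + 1) = 1 by omega, Nat.sub_self, Nat.sub_self]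
  linear_combination h + hb

/-- Replacing the weight `2k` by `2k - n` does not change the sum: the difference is `n` times
`∑_k ∂T/∂k`, which is odd under `k ↦ n - k`. -/
lemma sum_weight (n : ℕ) :
    S n = 2 * ∑ k ∈ range (n + 1), B k ^ 2 * B (n - k) ^ 2 * (1 + k * (G k - G (n - k))) := by
  have hodd : ∑ k ∈ range (n + 1), B k ^ 2 * B (n - k) ^ 2 * (G k - G (n - k)) = 0 := by
    have hr := sum_range_reflect
      (fun k => B k ^ 2 * B (n - k) ^ 2 * (G k - G (n - k))) (n + 1)
    have hneg : ∑ k ∈ range (n + 1), B (n + 1 - 1 - k) ^ 2 * B (n - (n + 1 - 1 - k)) ^ 2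
          * (G (n + 1 - 1 - k) - G (n - (n + 1 - 1 - k)))
        = -∑ k ∈ range (n + 1), B k ^ 2 * B (n - k) ^ 2 * (G k - G (n - k)) := by
      rw [← sum_neg_distrib]
      refine sum_congr rfl fun k hk => ?_
      have hk' : k ≤ n := by simpa [Nat.lt_succ_iff] using hk
      rw [Nat.add_sub_cancel, Nat.sub_sub_self hk']
      ring
    linarith
  have h : S n = 2 * (∑ k ∈ range (n + 1),
        B k ^ 2 * B (n - k) ^ 2 * (1 + k * (G k - G (n - k))))
      - n * ∑ k ∈ range (n + 1), B k ^ 2 * B (n - k) ^ 2 * (G k - G (n - k)) := by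
    unfold S
    rw [mul_sum, mul_sum, ← sum_sub_distrib]
    refine sum_congr rfl fun k hk => ?_
    have hk' : k ≤ n := by simpa [Nat.lt_succ_iff] using hk
    unfold term
    rw [Nat.cast_sub hk']
    ring
  rw [h, hodd]
  ring

end CaseB

/-- Case B: the sequence
`a_n = C(2n,n)C(3n,n) Σ_{k=0}^n C(2k,k)²C(3k,k)²C(2n−2k,n−k)²C(3n−3k,n−k)²
       (1 + 6k(H_{3k} − H_k − H_{3n−3k} + H_{n−k}))`
satisfies, for all `n ≥ 1` (with `a_{−1} = 0`, encoded by the vanishing factor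
`(n−1)` at `n = 1`):
`n⁷ a_n = 27(2n−1)(3n−2)(3n−1)(81(n−1)⁴+162(n−1)³+198(n−1)²+117(n−1)+28) a_{n−1}
          − 3¹² (n−1)(3n−5)(3n−4)²(3n−2)²(3n−1) a_{n−2}`;
i.e. `y₀ = Σ a_n zⁿ` is annihilated by
`θ⁷ − 27z(2θ+1)(3θ+1)(3θ+2)(81θ⁴+162θ³+198θ²+117θ+28)
     + 3¹²z²(θ+1)(3θ+1)(3θ+2)²(3θ+4)²(3θ+5)`. -/
theorem stmt16 (H : ℕ → ℚ) (hH : ∀ n, H n = ∑ i ∈ range n, (1 : ℚ) / (i + 1))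
    (a : ℕ → ℚ)
    (ha : ∀ n, a n = (Nat.choose (2 * n) n : ℚ) * (Nat.choose (3 * n) n : ℚ) *
        ∑ k ∈ range (n + 1),
          (Nat.choose (2 * k) k : ℚ) ^ 2 * (Nat.choose (3 * k) k : ℚ) ^ 2
            * (Nat.choose (2 * n - 2 * k) (n - k) : ℚ) ^ 2
            * (Nat.choose (3 * n - 3 * k) (n - k) : ℚ) ^ 2
            * (1 + 6 * (k : ℚ)
                * (H (3 * k) - H k - H (3 * n - 3 * k) + H (n - k)))) :
    ∀ n : ℕ, 1 ≤ n →
      (n : ℚ) ^ 7 * a n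
        = 27 * (2 * (n : ℚ) - 1) * (3 * (n : ℚ) - 2) * (3 * (n : ℚ) - 1)
            * (81 * ((n : ℚ) - 1) ^ 4 + 162 * ((n : ℚ) - 1) ^ 3
                + 198 * ((n : ℚ) - 1) ^ 2 + 117 * ((n : ℚ) - 1) + 28) * a (n - 1)
          - 3 ^ 12 * ((n : ℚ) - 1) * (3 * (n : ℚ) - 5) * (3 * (n : ℚ) - 4) ^ 2
            * (3 * (n : ℚ) - 2) ^ 2 * (3 * (n : ℚ) - 1) * a (n - 2) := by
  intro n hn
  have hS : ∀ n, a n = CaseB.B n * (CaseB.S n / 2) := by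
    intro n
    rw [ha, CaseB.sum_weight, CaseB.B, mul_div_cancel_left₀ _ (by norm_num : (2 : ℚ) ≠ 0)]
    congr 1
    refine sum_congr rfl fun k _ => ?_
    simp only [CaseB.B, CaseB.G, CaseB.harm, hH, Nat.mul_sub]
    ring
  obtain rfl | ⟨N, rfl⟩ : n = 1 ∨ ∃ N, n = N + 2 := by
    rcases n with _ | _ | N
    · omega
    · exact Or.inl rfl
    · exact Or.inr ⟨N, rfl⟩
  · simp only [Nat.sub_self, hS, CaseB.S, CaseB.term, sum_range_succ, sum_range_zero,
      Nat.sub_zero, CaseB.B_zero, CaseB.B_one, CaseB.G_zero, CaseB.G_one]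
    norm_num
  · have h := CaseB.sum_recurrence N
    have hB₂ : ((N : ℚ) + 2) ^ 2 * CaseB.B (N + 2)
        = 3 * (3 * N + 4) * (3 * N + 5) * CaseB.B (N + 1) := by
      rw [CaseB.B_succ (N + 1)]
      push_cast
      have h3 : (N : ℚ) + 1 + 1 ≠ 0 := by positivity
      field_simp
      ring
    have hB₁ : ((N : ℚ) + 1) ^ 2 * CaseB.B (N + 1)
        = 3 * (3 * N + 1) * (3 * N + 2) * CaseB.B N := by
      rw [CaseB.B_succ N]
      have h3 : (N : ℚ) + 1 ≠ 0 := by positivity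
      field_simp
    rw [show N + 2 - 1 = N + 1 by omega, show N + 2 - 2 = N by omega, hS, hS, hS]
    unfold CaseB.c₁ CaseB.c₂ at h
    push_cast
    linear_combination ((N : ℚ) + 2) ^ 5 * CaseB.S (N + 2) / 2 * hB₂
      + 3 * (3 * (N : ℚ) + 4) * (3 * N + 5) * CaseB.B (N + 1) / 2 * h
      - 3 ^ 11 * ((N : ℚ) + 1) * (3 * N + 2) * (3 * N + 4) ^ 2 * (3 * N + 5)
        * CaseB.S N / 2 * hB₁
end
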